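/- Let g be a complex simple Lie algebra whose Chevalley involution ψ is an inner automorphism, and let G = Aut(g)⁰ be its adjoint group acting on V = g. Then G'/G is the group of order 2 generated by the coset of the scalar map −1 (multiplication by −1 on g); equivalently, G' = G ∪ (−1)·G. -/

import Mathlib

noncomputable section

/-- A function `V → ℂ` is a polynomial function if it lies in the subalgebra of
functions generated by the linear functionals, i.e. it is given by a polynomial
in linear coordinates. -/
def IsPolyFun {V : Type*} [AddCommGroup V] [Module ℂ V] (f : V → ℂ) : Prop :=
  f ∈ Algebra.adjoin ℂ (Set.range fun l : V →ₗ[ℂ] ℂ => (l : V → ℂ))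

/-- Given a subgroup `G` of `GL(V)`, the group `G'` of all linear automorphisms of `V`
preserving every `G`-invariant polynomial function on `V`. -/
def primeGroup {V : Type*} [AddCommGroup V] [Module ℂ V]
    (G : Subgroup (V ≃ₗ[ℂ] V)) : Subgroup (V ≃ₗ[ℂ] V) where
  carrier := {φ | ∀ f : V → ℂ, IsPolyFun f →
      (∀ g ∈ G, ∀ v : V, f (g v) = f v) → ∀ v : V, f (φ v) = f v}
  one_mem' := by intro f _ _ v; rfl
  mul_mem' := by
    intro a b ha hb f hf hinv v
    have h2 : f (a (b v)) = f (b v) := ha f hf hinv (b v)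
    exact h2.trans (hb f hf hinv v)
  inv_mem' := by
    intro a ha f hf hinv v
    have h := ha f hf hinv (a⁻¹ v)
    have : a (a⁻¹ v) = v := a.apply_symm_apply v
    rw [this] at h
    exact h.symm

/-- The algebraic exponential of an endomorphism of a finite-dimensional space
(intended for nilpotent endomorphisms, where the series is a finite sum). -/
def endExp {g : Type*} [AddCommGroup g] [Module ℂ g] [FiniteDimensional ℂ g]
    (A : Module.End ℂ g) : Module.End ℂ g :=
  ∑ k ∈ Finset.range (Module.finrank ℂ g + 1), (k.factorial : ℂ)⁻¹ • A ^ k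

/-- The adjoint group `G = Aut(g)⁰` of a semisimple Lie algebra `g`: the subgroup of
`GL(g)` generated by the exponentials of nilpotent inner derivations `ad x`. -/
def adjointGroup (g : Type*) [LieRing g] [LieAlgebra ℂ g] [FiniteDimensional ℂ g] :
    Subgroup (g ≃ₗ[ℂ] g) :=
  Subgroup.closure {u : g ≃ₗ[ℂ] g | ∃ x : g,
    IsNilpotent (LieAlgebra.ad ℂ g x) ∧ (u : g →ₗ[ℂ] g) = endExp (LieAlgebra.ad ℂ g x)}

/-- The subgroup of `GL(g)` fixing a subalgebra `t` pointwise. -/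
def pointwiseStab {g : Type*} [LieRing g] [LieAlgebra ℂ g]
    (t : LieSubalgebra ℂ g) : Subgroup (g ≃ₗ[ℂ] g) where
  carrier := {u | ∀ x ∈ t, u x = x}
  one_mem' := by intro x _; rfl
  mul_mem' := by
    intro a b ha hb x hx
    have : a (b x) = a x := by rw [hb x hx]
    exact this.trans (ha x hx)
  inv_mem' := by
    intro a ha x hx
    conv_lhs => rw [← ha x hx]
    exact a.symm_apply_apply x

/-- The maximal torus of the adjoint group corresponding to a Cartan subalgebra `t`:
the elements of the adjoint group acting trivially on `t`. -/
def maximalTorus (g : Type*) [LieRing g] [LieAlgebra ℂ g] [FiniteDimensional ℂ g]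
    (t : LieSubalgebra ℂ g) : Subgroup (g ≃ₗ[ℂ] g) :=
  adjointGroup g ⊓ pointwiseStab t


/-! ### Basics on the adjoint group -/

/-- A linear automorphism compatible with the bracket. -/
def IsLieAut {g : Type*} [LieRing g] [LieAlgebra ℂ g] (u : g ≃ₗ[ℂ] g) : Prop :=
  ∀ x y : g, u ⁅x, y⁆ = ⁅u x, u y⁆

section Basics

variable {g : Type*} [LieRing g] [LieAlgebra ℂ g]

theorem IsLieAut.mul {u v : g ≃ₗ[ℂ] g} (hu : IsLieAut u) (hv : IsLieAut v) :
    IsLieAut (u * v) := by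
  intro x y
  change u (v ⁅x, y⁆) = ⁅u (v x), u (v y)⁆
  rw [hv, hu]

theorem IsLieAut.one : IsLieAut (1 : g ≃ₗ[ℂ] g) := fun _ _ => rfl

theorem linEquiv_inv_apply (u : g ≃ₗ[ℂ] g) (x : g) : u⁻¹ (u x) = x :=
  u.symm_apply_apply x

theorem linEquiv_apply_inv (u : g ≃ₗ[ℂ] g) (x : g) : u (u⁻¹ x) = x :=
  u.apply_symm_apply x

theorem linEquiv_mul_apply (u v : g ≃ₗ[ℂ] g) (x : g) : (u * v) x = u (v x) := rfl

theorem IsLieAut.inv {u : g ≃ₗ[ℂ] g} (hu : IsLieAut u) : IsLieAut u⁻¹ := by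
  intro x y
  apply u.injective
  rw [hu, linEquiv_apply_inv, linEquiv_apply_inv, linEquiv_apply_inv]

/-- The Lie equivalence attached to an automorphism. -/
def IsLieAut.toLieEquiv {u : g ≃ₗ[ℂ] g} (hu : IsLieAut u) : g ≃ₗ⁅ℂ⁆ g :=
  { u with map_lie' := fun {x y} => hu x y }

@[simp] theorem IsLieAut.toLieEquiv_apply {u : g ≃ₗ[ℂ] g} (hu : IsLieAut u) (x : g) :
    hu.toLieEquiv x = u x := rfl

theorem IsLieAut.ad_conj {u : g ≃ₗ[ℂ] g} (hu : IsLieAut u) (x : g) :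
    LieAlgebra.ad ℂ g (u x) = u.conj (LieAlgebra.ad ℂ g x) := by
  ext y
  simp [LinearEquiv.conj_apply, hu x]

theorem lconj_pow (u : g ≃ₗ[ℂ] g) (A : Module.End ℂ g) (k : ℕ) :
    u.conj (A ^ k) = (u.conj A) ^ k := by
  induction k with
  | zero => ext; simp [LinearEquiv.conj_apply]
  | succ n ih =>
    rw [pow_succ, pow_succ, ← ih]
    ext y
    simp [LinearEquiv.conj_apply]

theorem conj_trace_pow {u : g ≃ₗ[ℂ] g} (hu : IsLieAut u) (x : g) (k : ℕ) :
    LinearMap.trace ℂ g ((LieAlgebra.ad ℂ g (u x)) ^ k) =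
      LinearMap.trace ℂ g ((LieAlgebra.ad ℂ g x) ^ k) := by
  rw [hu.ad_conj, ← lconj_pow, LinearMap.trace_conj']

variable [FiniteDimensional ℂ g]

theorem pow_finrank_of_isNilpotent {A : Module.End ℂ g} (hA : IsNilpotent A) :
    A ^ (Module.finrank ℂ g) = 0 := by
  have h := hA.charpoly_eq_X_pow_finrank
  have h2 := LinearMap.aeval_self_charpoly A
  rw [h] at h2
  simpa using h2

theorem endExp_aut {x : g} (hx : IsNilpotent (LieAlgebra.ad ℂ g x)) :
    ∃ u : g ≃ₗ[ℂ] g, IsLieAut u ∧ (u : g →ₗ[ℂ] g) = endExp (LieAlgebra.ad ℂ g x) := by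
  let _i : Module ℚ g := Module.compHom g (algebraMap ℚ ℂ)
  let _j : LieAlgebra ℚ g :=
    { lie_smul := fun q x y => lie_smul (algebraMap ℚ ℂ q) x y }
  let D : LieDerivation ℂ g g := LieDerivation.ad ℂ g x
  have hD : D.toLinearMap = LieAlgebra.ad ℂ g x := by ext y; simp [D]
  have hn : IsNilpotent D.toLinearMap := by rw [hD]; exact hx
  refine ⟨(LieDerivation.exp D hn).toLinearEquiv, ?_, ?_⟩
  · intro x y
    exact (LieDerivation.exp D hn).map_lie x y
  · rw [← hD]
    have h : (D.toLinearMap) ^ (Module.finrank ℂ g + 1) = 0 := by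
      rw [pow_succ, pow_finrank_of_isNilpotent hn, zero_mul]
    ext y
    change LieDerivation.exp D hn y = _
    rw [LieDerivation.exp_map_apply, IsNilpotent.exp_eq_sum h, endExp]
    simp only [LinearMap.sum_apply, LinearMap.smul_apply]
    refine Finset.sum_congr rfl fun i _ => ?_
    change (algebraMap ℚ ℂ) (i.factorial : ℚ)⁻¹ • (D.toLinearMap ^ i) y = _
    simp

theorem adjointGroup_isLieAut {u : g ≃ₗ[ℂ] g} (hu : u ∈ adjointGroup g) : IsLieAut u := by
  induction hu using Subgroup.closure_induction with
  | mem u h =>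
    obtain ⟨x, hx, hux⟩ := h
    obtain ⟨v, hv, hvx⟩ := endExp_aut hx
    have : u = v := by
      apply LinearEquiv.toLinearMap_injective
      rw [hux, hvx]
    rwa [this]
  | one => exact IsLieAut.one
  | mul _ _ _ _ h1 h2 => exact h1.mul h2
  | inv _ _ h => exact h.inv

theorem exists_mem_adjointGroup {x : g} (hx : IsNilpotent (LieAlgebra.ad ℂ g x)) :
    ∃ u ∈ adjointGroup g, (u : g →ₗ[ℂ] g) = endExp (LieAlgebra.ad ℂ g x) := by
  obtain ⟨v, hv, hvx⟩ := endExp_aut hx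
  exact ⟨v, Subgroup.subset_closure ⟨x, hx, hvx⟩, hvx⟩

theorem conj_endExp (s : g ≃ₗ[ℂ] g) (A : Module.End ℂ g) :
    s.conj (endExp A) = endExp (s.conj A) := by
  simp only [endExp, map_sum, map_smul, lconj_pow]

theorem adjointGroup_normal {s u : g ≃ₗ[ℂ] g} (hs : IsLieAut s) (hu : u ∈ adjointGroup g) :
    s * u * s⁻¹ ∈ adjointGroup g := by
  induction hu using Subgroup.closure_induction with
  | mem u h =>
    obtain ⟨x, hx, hux⟩ := h
    refine Subgroup.subset_closure ⟨s x, ?_, ?_⟩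
    · obtain ⟨k, hk⟩ := hx
      refine ⟨k, ?_⟩
      rw [hs.ad_conj, ← lconj_pow, hk, map_zero]
    · rw [hs.ad_conj, ← conj_endExp, ← hux]
      rfl
  | one => simp
  | mul a b _ _ h1 h2 =>
    have : s * (a * b) * s⁻¹ = (s * a * s⁻¹) * (s * b * s⁻¹) := by group
    rw [this]; exact Subgroup.mul_mem _ h1 h2
  | inv a _ h =>
    have : s * a⁻¹ * s⁻¹ = (s * a * s⁻¹)⁻¹ := by group
    rw [this]; exact Subgroup.inv_mem _ h

theorem neg_notMem_adjointGroup [LieAlgebra.IsSimple ℂ g] :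
    (LinearEquiv.neg ℂ : g ≃ₗ[ℂ] g) ∉ adjointGroup g := by
  intro h
  have h1 := adjointGroup_isLieAut h
  apply LieAlgebra.IsSimple.non_abelian ℂ (L := g)
  constructor
  intro x y
  have := h1 x y
  simp only [LinearEquiv.neg_apply, neg_lie, lie_neg, neg_neg] at this
  have h2 : (2 : ℂ) • ⁅x, y⁆ = 0 := by
    rw [two_smul]; nth_rewrite 1 [← this]; exact neg_add_cancel _
  simpa using h2

end Basics


/-! ### Linear maps preserving the traces of powers of `ad` -/

section Expand

variable {V : Type*} [AddCommGroup V] [Module ℂ V]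

/-- First order term of `(X + s Y) ^ n`. -/
def firstOrder (X Y : Module.End ℂ V) : ℕ → Module.End ℂ V
  | 0 => 0
  | n + 1 => firstOrder X Y n * X + X ^ n * Y

theorem expand_pow (X Y : Module.End ℂ V) (n : ℕ) :
    ∃ R : ℂ → Module.End ℂ V,
      (∀ l : Module.End ℂ V →ₗ[ℂ] ℂ, Continuous fun s => l (R s)) ∧
      ∀ s : ℂ, (X + s • Y) ^ n = X ^ n + s • firstOrder X Y n + (s ^ 2) • R s := by
  induction n with
  | zero => exact ⟨fun _ => 0, fun l => by simpa using continuous_const, fun s => by simp [firstOrder]⟩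
  | succ n ih =>
    obtain ⟨R, hR, h⟩ := ih
    refine ⟨fun s => firstOrder X Y n * Y + R s * X + s • (R s * Y), fun l => ?_, fun s => ?_⟩
    · simp only [map_add, map_smul]
      have h1 := hR (l ∘ₗ LinearMap.mulRight ℂ X)
      have h2 := hR (l ∘ₗ LinearMap.mulRight ℂ Y)
      simp only [LinearMap.comp_apply, LinearMap.mulRight_apply] at h1 h2
      exact (continuous_const.add h1).add (continuous_id.smul h2)
    · rw [pow_succ, h, firstOrder, pow_succ X n]
      simp only [add_mul, mul_add, smul_mul_assoc, mul_smul_comm]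
      module

theorem coeff_one_eq {a b a' b' : ℂ} {c c' : ℂ → ℂ} (hc : Continuous c) (hc' : Continuous c')
    (h : ∀ s : ℂ, a + s * b + s ^ 2 * c s = a' + s * b' + s ^ 2 * c' s) : b = b' := by
  have ha : a = a' := by simpa using h 0
  have h1 : (fun s => b + s * c s) = fun s => b' + s * c' s := by
    refine Continuous.ext_on (dense_compl_singleton (0 : ℂ)) (by fun_prop) (by fun_prop) ?_
    intro s hs
    have hs' : s ≠ 0 := hs
    apply mul_left_cancel₀ hs'
    have := h s
    rw [ha] at this
    linear_combination this
  simpa using congrFun h1 0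

theorem trace_firstOrder [FiniteDimensional ℂ V] (X Y : Module.End ℂ V) (n m : ℕ) :
    LinearMap.trace ℂ V (firstOrder X Y (n + 1) * X ^ m) =
      (n + 1) * LinearMap.trace ℂ V (X ^ (n + m) * Y) := by
  induction n generalizing m with
  | zero =>
    simp only [firstOrder, zero_mul, zero_add, pow_zero, one_mul, Nat.cast_zero]
    rw [LinearMap.trace_mul_comm]
  | succ n ih =>
    have e0 : LinearMap.trace ℂ V (X ^ (n + 1) * Y * X ^ m) =
        LinearMap.trace ℂ V (X ^ (n + 1 + m) * Y) := by
      rw [LinearMap.trace_mul_comm, ← mul_assoc, ← pow_add, add_comm m]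
    have e1 : n + (m + 1) = n + 1 + m := by omega
    rw [firstOrder, add_mul, mul_assoc, ← pow_succ', map_add, ih, e0, e1]
    push_cast
    ring

theorem firstOrder_comm (X Y : Module.End ℂ V) (n : ℕ) :
    firstOrder X (Y * X - X * Y) n = Y * X ^ n - X ^ n * Y := by
  induction n with
  | zero => simp [firstOrder]
  | succ n ih =>
    rw [firstOrder, ih, pow_succ]
    noncomm_ring

end Expand

section Preserver

variable {g : Type*} [LieRing g] [LieAlgebra ℂ g] [FiniteDimensional ℂ g]

open LieAlgebra LieModule

/-- Linear maps annihilating infinitesimally all `x ↦ tr (ad x)^k`. -/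
def invLie (g : Type*) [LieRing g] [LieAlgebra ℂ g] [FiniteDimensional ℂ g] :
    Submodule ℂ (Module.End ℂ g) where
  carrier := {A | ∀ (k : ℕ) (x : g), LinearMap.trace ℂ g ((ad ℂ g x) ^ k * ad ℂ g (A x)) = 0}
  zero_mem' := by intro k x; simp
  add_mem' := by
    intro A B hA hB k x
    simp only [Set.mem_ofPred_eq] at hA hB
    simp [mul_add, hA k x, hB k x]
  smul_mem' := by
    intro c A hA k x
    simp only [Set.mem_ofPred_eq] at hA
    simp [hA k x]

theorem mem_invLie {A : Module.End ℂ g} : A ∈ invLie g ↔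
    ∀ (k : ℕ) (x : g), LinearMap.trace ℂ g ((ad ℂ g x) ^ k * ad ℂ g (A x)) = 0 := Iff.rfl

theorem ad_lie_eq (x y : g) : ad ℂ g ⁅x, y⁆ = ad ℂ g x * ad ℂ g y - ad ℂ g y * ad ℂ g x := by
  ext z; simp

theorem ad_mem_invLie (y : g) : ad ℂ g y ∈ invLie g := by
  intro k x
  rw [ad_apply, ad_lie_eq, mul_sub, map_sub, ← mul_assoc, LinearMap.trace_mul_comm, ← mul_assoc,
    ← mul_assoc, ← pow_succ', ← pow_succ, sub_self]

theorem trace_preserver_polar {φ : g ≃ₗ[ℂ] g}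
    (hφ : ∀ (k : ℕ) (x : g), LinearMap.trace ℂ g ((ad ℂ g (φ x)) ^ k) =
      LinearMap.trace ℂ g ((ad ℂ g x) ^ k)) (k : ℕ) (x y : g) :
    LinearMap.trace ℂ g ((ad ℂ g (φ x)) ^ k * ad ℂ g (φ y)) =
      LinearMap.trace ℂ g ((ad ℂ g x) ^ k * ad ℂ g y) := by
  obtain ⟨R, hR, h⟩ := expand_pow (ad ℂ g (φ x)) (ad ℂ g (φ y)) (k + 1)
  obtain ⟨R', hR', h'⟩ := expand_pow (ad ℂ g x) (ad ℂ g y) (k + 1)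
  have key := coeff_one_eq (hR (LinearMap.trace ℂ g)) (hR' (LinearMap.trace ℂ g))
    (a := LinearMap.trace ℂ g (ad ℂ g (φ x) ^ (k + 1)))
    (a' := LinearMap.trace ℂ g (ad ℂ g x ^ (k + 1)))
    (b := LinearMap.trace ℂ g (firstOrder (ad ℂ g (φ x)) (ad ℂ g (φ y)) (k + 1)))
    (b' := LinearMap.trace ℂ g (firstOrder (ad ℂ g x) (ad ℂ g y) (k + 1))) (by
      intro s
      have h1 := hφ (k + 1) (x + s • y)
      rw [map_add, map_smul, map_add, map_smul, map_add, map_smul, h, h'] at h1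
      simpa using h1)
  have t1 := trace_firstOrder (ad ℂ g (φ x)) (ad ℂ g (φ y)) k 0
  have t2 := trace_firstOrder (ad ℂ g x) (ad ℂ g y) k 0
  rw [pow_zero, mul_one, add_zero] at t1 t2
  rw [t1, t2] at key
  have hk : ((k : ℂ) + 1) ≠ 0 := by exact_mod_cast Nat.succ_ne_zero k
  exact mul_left_cancel₀ hk key

theorem conj_mem_invLie {φ : g ≃ₗ[ℂ] g}
    (hφ : ∀ (k : ℕ) (x : g), LinearMap.trace ℂ g ((ad ℂ g (φ x)) ^ k) =
      LinearMap.trace ℂ g ((ad ℂ g x) ^ k)) {A : Module.End ℂ g} (hA : A ∈ invLie g) :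
    φ.conj A ∈ invLie g := by
  intro k x
  obtain ⟨u, rfl⟩ := φ.surjective x
  simp only [LinearEquiv.conj_apply, LinearMap.comp_apply, LinearEquiv.coe_coe,
    LinearEquiv.symm_apply_apply]
  rw [trace_preserver_polar hφ, hA k u]

theorem comm_mem_invLie (y : g) {A : Module.End ℂ g} (hA : A ∈ invLie g) :
    ad ℂ g y * A - A * ad ℂ g y ∈ invLie g := by
  intro k x
  obtain ⟨R, hR, h⟩ := expand_pow (ad ℂ g x) (ad ℂ g ⁅y, x⁆) k
  have key := coeff_one_eq (a := 0) (a' := 0) (b' := 0) (c' := fun _ => 0)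
    (b := LinearMap.trace ℂ g (firstOrder (ad ℂ g x) (ad ℂ g ⁅y, x⁆) k * ad ℂ g (A x)) +
      LinearMap.trace ℂ g (ad ℂ g x ^ k * ad ℂ g (A ⁅y, x⁆)))
    (c := fun s => LinearMap.trace ℂ g (R s * ad ℂ g (A x)) +
      LinearMap.trace ℂ g (firstOrder (ad ℂ g x) (ad ℂ g ⁅y, x⁆) k * ad ℂ g (A ⁅y, x⁆)) +
      s * LinearMap.trace ℂ g (R s * ad ℂ g (A ⁅y, x⁆))) (by
        have h1 := hR (LinearMap.trace ℂ g ∘ₗ LinearMap.mulRight ℂ (ad ℂ g (A x)))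
        have h2 := hR (LinearMap.trace ℂ g ∘ₗ LinearMap.mulRight ℂ (ad ℂ g (A ⁅y, x⁆)))
        simp only [LinearMap.comp_apply, LinearMap.mulRight_apply] at h1 h2
        exact (h1.add continuous_const).add (continuous_id.mul h2)) continuous_const (by
        intro s
        have h1 := hA k (x + s • ⁅y, x⁆)
        have h0 := hA k x
        rw [map_add, map_smul, h, map_add, map_smul, map_add, map_smul] at h1
        simp only [add_mul, mul_add, smul_mul_assoc, mul_smul_comm, map_add, map_smul,
          smul_eq_mul, h0] at h1
        linear_combination h1)
  rw [ad_lie_eq y x, firstOrder_comm, sub_mul, map_sub] at key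
  have e : (ad ℂ g y * A - A * ad ℂ g y) x = ⁅y, A x⁆ - A ⁅y, x⁆ := by simp
  rw [e, map_sub, mul_sub, map_sub, ad_lie_eq y (A x), mul_sub, map_sub]
  have e1 : LinearMap.trace ℂ g (ad ℂ g y * ad ℂ g x ^ k * ad ℂ g (A x)) =
      LinearMap.trace ℂ g (ad ℂ g x ^ k * (ad ℂ g (A x) * ad ℂ g y)) := by
    rw [mul_assoc, LinearMap.trace_mul_comm, mul_assoc]
  rw [e1, mul_assoc] at key
  linear_combination -key

end Preserver

set_option linter.unusedSectionVars false

/-! ### Calculus with weight vectors -/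

section WeightCalc

variable {g : Type*} [LieRing g] [LieAlgebra ℂ g] [FiniteDimensional ℂ g]
  [LieAlgebra.IsKilling ℂ g] {H : LieSubalgebra ℂ g} [H.IsCartanSubalgebra]

open LieAlgebra LieModule

variable (H) in
theorem weight_induction {p : g → Prop} (h0 : p 0) (hadd : ∀ x y, p x → p y → p (x + y))
    (hw : ∀ (α : Weight ℂ H g) (x : g), x ∈ rootSpace H α → p x) (x : g) : p x := by
  have h := iSup_genWeightSpace_eq_top' ℂ H g
  rw [← LieSubmodule.toSubmodule_inj, LieSubmodule.iSup_toSubmodule,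
    LieSubmodule.top_toSubmodule] at h
  have hx : x ∈ ⨆ α : Weight ℂ H g, (genWeightSpace g α).toSubmodule := by rw [h]; trivial
  induction hx using Submodule.iSup_induction' with
  | mem α x hx => exact hw α x hx
  | zero => exact h0
  | add x y _ _ h1 h2 => exact hadd x y h1 h2

variable (H) in
theorem end_ext_weight {A B : g →ₗ[ℂ] g}
    (h : ∀ (α : Weight ℂ H g) (x : g), x ∈ rootSpace H α → A x = B x) : A = B := by
  ext x
  refine weight_induction H (p := fun x => A x = B x) (by simp) ?_ h x
  intro x y hx hy
  rw [map_add, map_add, hx, hy]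

theorem lie_root {α : Weight ℂ H g} {x : g} (hx : x ∈ rootSpace H α) (h : H) :
    ⁅(h : g), x⁆ = α h • x :=
  IsKilling.lie_eq_smul_of_mem_rootSpace hx h

variable (H) in
theorem exists_generic {ι : Type*} [Finite ι] (S : ι → Submodule ℂ H) (hS : ∀ i, S i ≠ ⊤) :
    ∃ h : H, (∀ α β : Weight ℂ H g, α ≠ β → α h ≠ β h) ∧
      (∀ α : Weight ℂ H g, α.IsNonZero → α h ≠ 0) ∧ ∀ i, h ∉ S i := by
  let p : {q : Weight ℂ H g × Weight ℂ H g // q.1 ≠ q.2} ⊕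
      {α : Weight ℂ H g // α.IsNonZero} ⊕ ι → Submodule ℂ H :=
    Sum.elim (fun q => LinearMap.ker (q.1.1.toLinear - q.1.2.toLinear))
      (Sum.elim (fun α => LinearMap.ker α.1.toLinear) S)
  have hp : ∀ i, p i ≠ ⊤ := by
    rintro (q | α | i)
    · intro h
      simp only [p, Sum.elim_inl] at h
      rw [LinearMap.ker_eq_top, sub_eq_zero] at h
      apply q.2
      ext x
      exact LinearMap.congr_fun h x
    · intro h
      simp only [p, Sum.elim_inr, Sum.elim_inl] at h
      rw [LinearMap.ker_eq_top] at h
      apply α.2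
      ext x
      exact LinearMap.congr_fun h x
    · exact hS i
  obtain ⟨h, hh⟩ := Submodule.exists_forall_notMem_of_forall_ne_top p hp
  refine ⟨h, fun α β hab e => hh (Sum.inl ⟨(α, β), hab⟩) ?_, fun α hα e =>
    hh (Sum.inr (Sum.inl ⟨α, hα⟩)) ?_, fun i => hh (Sum.inr (Sum.inr i))⟩
  · simp [p, e]
  · simp [p, e]

theorem aeval_ad_root (h : H) (P : Polynomial ℂ) {α : Weight ℂ H g} {x : g}
    (hx : x ∈ rootSpace H α) :
    Polynomial.aeval (ad ℂ g (h : g)) P x = P.eval (α h) • x := by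
  refine Module.End.aeval_apply_of_mem_apply_eq_smul ?_
  rw [ad_apply, lie_root hx]

theorem exists_interp {h : H} (hh : ∀ α β : Weight ℂ H g, α ≠ β → α h ≠ β h)
    (f : Weight ℂ H g → ℂ) : ∃ P : Polynomial ℂ, ∀ (α : Weight ℂ H g) (x : g),
      x ∈ rootSpace H α → Polynomial.aeval (ad ℂ g (h : g)) P x = f α • x := by
  classical
  let _i : Fintype (Weight ℂ H g) := Fintype.ofFinite _
  refine ⟨Lagrange.interpolate Finset.univ (fun α : Weight ℂ H g => α h) f, fun α x hx => ?_⟩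
  rw [aeval_ad_root h _ hx, Lagrange.eval_interpolate_at_node (v := fun α : Weight ℂ H g => α h)]
  · intro a _ b _ e
    by_contra hab
    exact hh a b hab e
  · exact Finset.mem_univ _

theorem exists_ad_eq_aeval {h : H} (hh : ∀ α β : Weight ℂ H g, α ≠ β → α h ≠ β h) (h' : H) :
    ∃ P : Polynomial ℂ, ad ℂ g (h' : g) = Polynomial.aeval (ad ℂ g (h : g)) P := by
  obtain ⟨P, hP⟩ := exists_interp hh (fun α => α h')
  refine ⟨P, end_ext_weight H fun α x hx => ?_⟩
  rw [hP α x hx, ad_apply, lie_root hx]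

theorem killing_eq_trace (x y : g) :
    killingForm ℂ g x y = LinearMap.trace ℂ g (ad ℂ g x * ad ℂ g y) := rfl

theorem killing_invariant (x y z : g) : killingForm ℂ g ⁅x, y⁆ z = - killingForm ℂ g y ⁅x, z⁆ := by
  simp only [killing_eq_trace, ad_lie_eq, sub_mul, mul_sub, map_sub]
  rw [mul_assoc, LinearMap.trace_mul_comm, mul_assoc, mul_assoc]
  ring

theorem killing_symm (x y : g) : killingForm ℂ g x y = killingForm ℂ g y x := by
  rw [killing_eq_trace, killing_eq_trace, LinearMap.trace_mul_comm]

theorem eq_zero_of_killing {x : g} (h : ∀ y, killingForm ℂ g x y = 0) : x = 0 := by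
  have h1 : x ∈ LinearMap.ker (killingForm ℂ g) := by
    rw [LinearMap.mem_ker]; ext y; exact h y
  rwa [IsKilling.ker_killingForm_eq_bot] at h1

variable (H) in
theorem eq_zero_of_killing_root {x : g}
    (h : ∀ (α : Weight ℂ H g) (y : g), y ∈ rootSpace H α → killingForm ℂ g x y = 0) : x = 0 := by
  apply eq_zero_of_killing
  refine weight_induction H (by simp) (fun y z hy hz => ?_) h
  rw [map_add, hy, hz, add_zero]

theorem killing_root_root {α β : Weight ℂ H g} {x y : g} (hx : x ∈ rootSpace H α)
    (hy : y ∈ rootSpace H β) (h : (α + β : H → ℂ) ≠ 0) : killingForm ℂ g x y = 0 :=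
  LieAlgebra.killingForm_apply_eq_zero_of_mem_rootSpace_of_add_ne_zero ℂ g H hx hy h

theorem mem_zero_root {x : g} : x ∈ rootSpace H (0 : H → ℂ) ↔ x ∈ H := by
  rw [rootSpace_zero_eq, LieSubalgebra.mem_toLieSubmodule]

end WeightCalc

set_option linter.unusedSectionVars false

section InvLie

variable {g : Type*} [LieRing g] [LieAlgebra ℂ g] [FiniteDimensional ℂ g]
  [LieAlgebra.IsKilling ℂ g] {H : LieSubalgebra ℂ g} [H.IsCartanSubalgebra]

open LieAlgebra LieModule

theorem invLie_skew {A : Module.End ℂ g} (hA : A ∈ invLie g) (x y : g) :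
    killingForm ℂ g (A x) y = - killingForm ℂ g x (A y) := by
  have h : ∀ x, killingForm ℂ g x (A x) = 0 := fun x => by
    have h0 := hA 1 x
    rw [pow_one] at h0
    exact h0
  have h1 := h (x + y)
  simp only [map_add, LinearMap.add_apply, h x, h y] at h1
  rw [killing_symm (A x) y]
  linear_combination h1

theorem invLie_aeval {A : Module.End ℂ g} (hA : A ∈ invLie g) (x : g) (P : Polynomial ℂ) :
    LinearMap.trace ℂ g (Polynomial.aeval (ad ℂ g x) P * ad ℂ g (A x)) = 0 := by
  induction P using Polynomial.induction_on' with
  | add p q hp hq => rw [map_add, add_mul, map_add, hp, hq, add_zero]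
  | monomial n a =>
    rw [Polynomial.aeval_monomial, mul_assoc, ← Algebra.smul_def, map_smul, hA n x, smul_zero]

theorem invLie_cartan {A : Module.End ℂ g} (hA : A ∈ invLie g) (h h' : H) :
    killingForm ℂ g (A h) h' = 0 := by
  let S : Submodule ℂ H := LinearMap.ker
    ((killingForm ℂ g).flip (h' : g) ∘ₗ A ∘ₗ H.toSubmodule.subtype)
  by_contra hne
  have hS : S ≠ ⊤ := by
    intro e
    have : h ∈ S := by rw [e]; trivial
    exact hne this
  obtain ⟨k, hk, -, hk2⟩ := exists_generic H (fun _ : Unit => S) (fun _ => hS)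
  apply hk2 ()
  obtain ⟨P, hP⟩ := exists_ad_eq_aeval hk h'
  change killingForm ℂ g (A k) h' = 0
  rw [killing_symm, killing_eq_trace, hP, invLie_aeval hA]

theorem comm_apply (y : g) (A : Module.End ℂ g) (x : g) :
    (ad ℂ g y * A - A * ad ℂ g y) x = ⁅y, A x⁆ - A ⁅y, x⁆ := by simp

theorem lie_root' {α : Weight ℂ H g} {x : g} (hx : x ∈ rootSpace H α) (h : H) :
    ⁅x, (h : g)⁆ = - (α h • x) := by
  rw [← lie_skew, lie_root hx]

theorem invLie_rel {A : Module.End ℂ g} (hA : A ∈ invLie g) {α : Weight ℂ H g} {e : g}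
    (he : e ∈ rootSpace H α) (h h' : H) :
    α h' * killingForm ℂ g (A h) e = α h * killingForm ℂ g (A h') e := by
  have h1 := invLie_cartan (comm_mem_invLie e hA) h h'
  rw [comm_apply, map_sub, LinearMap.sub_apply, killing_invariant, lie_root' he, lie_root' he,
    map_neg, map_neg, map_neg, map_smul, map_smul, map_smul, LinearMap.neg_apply,
    LinearMap.smul_apply, invLie_skew hA e, killing_symm e] at h1
  simp only [smul_eq_mul] at h1
  linear_combination h1

theorem cartan_eq_zero {w : g} (hw : w ∈ H) (h : ∀ h' : H, killingForm ℂ g w h' = 0) : w = 0 := by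
  apply eq_zero_of_killing_root H
  intro α y hy
  by_cases hα : α.IsZero
  · rw [hα] at hy
    exact h ⟨y, mem_zero_root.mp hy⟩
  · refine LieAlgebra.killingForm_apply_eq_zero_of_mem_rootSpace_of_add_ne_zero ℂ g H
      (mem_zero_root.mpr hw) hy ?_
    rw [zero_add]
    exact hα

theorem weight_isZero_apply {α : Weight ℂ H g} (hα : α.IsZero) (h : H) : α h = 0 := by
  have : (α : H → ℂ) = 0 := hα
  rw [this]; rfl

variable (H) in
theorem invLie_reduce {A : Module.End ℂ g} (hA : A ∈ invLie g) :
    ∃ z : g, ∀ h : H, (A - ad ℂ g z) h = 0 := by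
  classical
  obtain ⟨h1, hd, hn, -⟩ := exists_generic H (fun i : Empty => i.elim) (fun i => i.elim)
  obtain ⟨P, hP⟩ := exists_interp hd (fun α => (α h1)⁻¹)
  have key : ∀ x : g, ⁅(h1 : g), Polynomial.aeval (ad ℂ g (h1 : g)) P x⁆ - x ∈ H := by
    refine weight_induction H (by simp) ?_ ?_
    · intro x y hx hy
      have := H.add_mem hx hy
      rw [map_add, lie_add]
      convert this using 1
      abel
    · intro α x hx
      rw [hP α x hx, lie_smul, lie_root hx]
      by_cases hα : α.IsZero
      · rw [weight_isZero_apply hα, zero_smul, smul_zero, zero_sub]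
        rw [hα] at hx
        exact H.neg_mem (mem_zero_root.mp hx)
      · rw [smul_smul, inv_mul_cancel₀ (hn α hα), one_smul, sub_self]
        exact H.zero_mem
  set y := Polynomial.aeval (ad ℂ g (h1 : g)) P (A h1) with hy
  have hw : ⁅(h1 : g), y⁆ - A h1 = 0 := by
    refine cartan_eq_zero (key (A h1)) fun h' => ?_
    have hc : ⁅(h1 : g), (h' : g)⁆ = 0 := by
      have : ⁅h1, h'⁆ = 0 := trivial_lie_zero H H h1 h'
      simpa using congrArg Subtype.val this
    rw [map_sub, LinearMap.sub_apply, killing_invariant, hc, map_zero, invLie_cartan hA]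
    simp
  refine ⟨-y, fun h => ?_⟩
  have hA' : A - ad ℂ g (-y) ∈ invLie g := (invLie g).sub_mem hA (ad_mem_invLie _)
  have h0 : (A - ad ℂ g (-y)) h1 = 0 := by
    rw [LinearMap.sub_apply, ad_apply, neg_lie, lie_skew, ← sub_eq_zero.mp hw, sub_self]
  apply eq_zero_of_killing_root H
  intro α e he
  by_cases hα : α.IsZero
  · rw [hα] at he
    exact invLie_cartan hA' h ⟨e, mem_zero_root.mp he⟩
  · have := invLie_rel hA' he h h1
    rw [h0, map_zero, LinearMap.zero_apply, mul_zero] at this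
    exact (mul_eq_zero.mp this).resolve_left (hn α hα)

theorem root_mem_span {α : Weight ℂ H g} (hα : α.IsNonZero) {e y : g} (he : e ∈ rootSpace H α)
    (he0 : e ≠ 0) (hy : y ∈ rootSpace H α) : ∃ c : ℂ, y = c • e := by
  have h1 := IsKilling.finrank_rootSpace_eq_one α hα
  obtain ⟨c, hc⟩ := (finrank_eq_one_iff_of_nonzero' (⟨e, he⟩ : rootSpace H α)
    (by simpa [Subtype.ext_iff] using he0)).mp h1 ⟨y, hy⟩
  exact ⟨c, by simpa using (congrArg Subtype.val hc).symm⟩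

theorem weight_prop {α β : Weight ℂ H g} (hα : α.IsNonZero) (hβ : β.IsNonZero)
    (h : ∀ h h' : H, α h' * β h = α h * β h') : α = -β ∨ α = β := by
  have : ∃ h1, β h1 ≠ 0 := by
    by_contra hc
    push Not at hc
    exact hβ (funext hc)
  obtain ⟨h1, h1n⟩ := this
  refine IsKilling.eq_neg_or_eq_of_eq_smul β α hα (k := α h1 / β h1) ?_
  funext h'
  have := h h1 h'
  simp only [Pi.smul_apply, smul_eq_mul]
  field_simp
  exact this

theorem invLie_comm_of_kill {A : Module.End ℂ g} (hA : A ∈ invLie g)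
    (hk : ∀ h : H, A h = 0) (h : H) : ad ℂ g (h : g) * A - A * ad ℂ g (h : g) = 0 := by
  refine end_ext_weight H fun β e he => ?_
  rw [comm_apply, lie_root he, map_smul, LinearMap.zero_apply]
  apply eq_zero_of_killing_root H
  intro α y hy
  rw [map_sub, LinearMap.sub_apply, killing_invariant, lie_root hy, map_smul, map_smul,
    LinearMap.smul_apply]
  suffices hs : (α h + β h) * killingForm ℂ g (A e) y = 0 by
    simp only [smul_eq_mul]
    linear_combination -hs
  by_cases hβ : β.IsZero
  · rw [hβ] at he
    rw [hk ⟨e, mem_zero_root.mp he⟩]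
    simp
  by_cases hα : α.IsZero
  · rw [hα] at hy
    rw [invLie_skew hA, hk ⟨y, mem_zero_root.mp hy⟩]
    simp
  by_cases h0 : killingForm ℂ g (A e) y = 0
  · rw [h0, mul_zero]
  have hrel : ∀ h h' : H, α h' * β h = α h * β h' := by
    intro h h'
    have := invLie_rel (comm_mem_invLie e hA) hy h h'
    simp only [comm_apply, hk, lie_root' he, lie_zero, zero_sub, map_neg, neg_neg, map_smul,
      LinearMap.smul_apply, smul_eq_mul] at this
    apply mul_right_cancel₀ h0
    linear_combination this
  rcases weight_prop hα hβ hrel with rfl | rfl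
  · simp
  · exfalso
    apply h0
    by_cases he0 : e = 0
    · simp [he0]
    obtain ⟨c, rfl⟩ := root_mem_span hα he he0 hy
    have h2 := invLie_skew hA e e
    rw [killing_symm e] at h2
    have : killingForm ℂ g (A e) e = 0 := by linear_combination h2 / 2
    rw [map_smul, this, smul_zero]

theorem invLie_comm_cartan {A : Module.End ℂ g} (hA : A ∈ invLie g) (h : H) :
    ∃ z : g, ad ℂ g (h : g) * A - A * ad ℂ g (h : g) = ad ℂ g z := by
  obtain ⟨z, hz⟩ := invLie_reduce H hA
  refine ⟨⁅(h : g), z⁆, ?_⟩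
  have := invLie_comm_of_kill ((invLie g).sub_mem hA (ad_mem_invLie z)) hz h
  rw [ad_lie_eq]
  rw [← sub_eq_zero, ← this]
  noncomm_ring

end InvLie

section Simple

variable {g : Type*} [LieRing g] [LieAlgebra ℂ g] [FiniteDimensional ℂ g]
  [LieAlgebra.IsSimple ℂ g]

open LieAlgebra LieModule

/-- The ideal of those `x` with `[ad x, L] ⊆ ad g`. -/
def invIdeal (g : Type*) [LieRing g] [LieAlgebra ℂ g] [FiniteDimensional ℂ g] : LieIdeal ℂ g where
  carrier := {x | ∀ A ∈ invLie g, ∃ z : g, ad ℂ g x * A - A * ad ℂ g x = ad ℂ g z}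
  zero_mem' := by intro A _; exact ⟨0, by simp⟩
  add_mem' := by
    intro x y hx hy A hA
    obtain ⟨z, hz⟩ := hx A hA
    obtain ⟨w, hw⟩ := hy A hA
    refine ⟨z + w, ?_⟩
    rw [map_add, map_add, ← hz, ← hw]
    noncomm_ring
  smul_mem' := by
    intro c x hx A hA
    obtain ⟨z, hz⟩ := hx A hA
    refine ⟨c • z, ?_⟩
    rw [map_smul, map_smul, ← hz, smul_sub, smul_mul_assoc, mul_smul_comm]
  lie_mem := by
    intro y x hx A hA
    obtain ⟨z, hz⟩ := hx A hA
    obtain ⟨w, hw⟩ := hx _ (comm_mem_invLie y hA)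
    refine ⟨⁅y, z⁆ - w, ?_⟩
    rw [map_sub, ad_lie_eq, ad_lie_eq, ← hz, ← hw]
    noncomm_ring

theorem nontrivial_of_isSimple (g : Type*) [LieRing g] [LieAlgebra ℂ g]
    [LieAlgebra.IsSimple ℂ g] : Nontrivial g := by
  by_contra h
  rw [not_nontrivial_iff_subsingleton] at h
  exact LieAlgebra.IsSimple.non_abelian ℂ (L := g) ⟨fun x y => Subsingleton.elim _ _⟩

theorem cartan_exists_ne_zero (H : LieSubalgebra ℂ g) [H.IsCartanSubalgebra] :
    ∃ h ∈ H, h ≠ (0 : g) := by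
  by_contra hc
  push Not at hc
  have := nontrivial_of_isSimple g
  obtain ⟨x, hx⟩ := exists_ne (0 : g)
  apply hx
  refine weight_induction H (p := fun x => x = 0) rfl (fun x y hx hy => by simp [hx, hy]) ?_ x
  intro α x hx
  have h0 : (α : H → ℂ) = 0 := by
    funext h
    have : h = 0 := by ext; exact hc h h.2
    rw [this]
    exact α.toLinear.map_zero
  rw [h0] at hx
  exact hc x (mem_zero_root.mp hx)

theorem ideal_eq_top {I : LieIdeal ℂ g} {x : g} (hx : x ∈ I) (h0 : x ≠ 0) : I = ⊤ := by
  rcases LieAlgebra.IsSimple.eq_bot_or_eq_top (R := ℂ) I with h | h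
  · rw [h] at hx
    exact absurd (by simpa using hx) h0
  · exact h

theorem exists_cartan (g : Type*) [LieRing g] [LieAlgebra ℂ g] [FiniteDimensional ℂ g] :
    ∃ H : LieSubalgebra ℂ g, H.IsCartanSubalgebra := by
  obtain ⟨x, hx⟩ := LieAlgebra.exists_isCartanSubalgebra_engel ℂ g
  exact ⟨_, hx⟩

theorem mem_invIdeal (x : g) : x ∈ invIdeal g := by
  obtain ⟨H, hH⟩ := exists_cartan g
  obtain ⟨h, hh, h0⟩ := cartan_exists_ne_zero H
  have : h ∈ invIdeal g := fun A hA => invLie_comm_cartan hA ⟨h, hh⟩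
  rw [ideal_eq_top this h0]
  trivial

theorem schur {B : Module.End ℂ g} (hB : ∀ x : g, ad ℂ g x * B - B * ad ℂ g x = 0) :
    ∃ c : ℂ, ∀ x, B x = c • x := by
  have := nontrivial_of_isSimple g
  obtain ⟨c, hc⟩ := Module.End.exists_eigenvalue B
  obtain ⟨v, hv⟩ := hc.exists_hasEigenvector
  refine ⟨c, ?_⟩
  let I : LieIdeal ℂ g :=
    { Module.End.eigenspace B c with
      lie_mem := by
        intro x m hm
        have hm' : B m = c • m := Module.End.mem_eigenspace_iff.mp hm
        refine Module.End.mem_eigenspace_iff.mpr ?_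
        have := LinearMap.congr_fun (hB x) m
        rw [comm_apply, LinearMap.zero_apply, sub_eq_zero, hm', lie_smul] at this
        exact this.symm }
  have hI : I = ⊤ := ideal_eq_top (x := v) hv.1 hv.2
  intro x
  have : x ∈ I := by rw [hI]; trivial
  exact Module.End.mem_eigenspace_iff.mp this

theorem ad_inj {x y : g} (h : ad ℂ g x = ad ℂ g y) : x = y := by
  rw [← sub_eq_zero]
  apply eq_zero_of_killing
  intro z
  rw [killing_eq_trace, map_sub, h, sub_self, zero_mul, map_zero]

theorem killing_ne_zero (g : Type*) [LieRing g] [LieAlgebra ℂ g] [FiniteDimensional ℂ g]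
    [LieAlgebra.IsSimple ℂ g] : ∃ x y : g, killingForm ℂ g x y ≠ 0 := by
  have := nontrivial_of_isSimple g
  obtain ⟨x, hx⟩ := exists_ne (0 : g)
  refine ⟨x, ?_⟩
  by_contra hc
  push Not at hc
  exact hx (eq_zero_of_killing hc)

theorem invLie_eq {A : Module.End ℂ g} (hA : A ∈ invLie g) : ∃ w : g, A = ad ℂ g w := by
  have h : ∀ y : g, ∃ z : g, A * ad ℂ g y - ad ℂ g y * A = ad ℂ g z := by
    intro y
    obtain ⟨z, hz⟩ := mem_invIdeal y A hA
    exact ⟨-z, by rw [map_neg, ← hz, neg_sub]⟩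
  choose D hD using h
  let D' : LieDerivation ℂ g g :=
    { toFun := D
      map_add' := by
        intro x y
        apply ad_inj
        rw [map_add, ← hD, ← hD, ← hD, map_add]
        noncomm_ring
      map_smul' := by
        intro c x
        apply ad_inj
        rw [RingHom.id_apply, map_smul, ← hD, ← hD, map_smul, smul_sub, smul_mul_assoc,
          mul_smul_comm]
      leibniz' := by
        intro x y
        apply ad_inj
        change ad ℂ g (D ⁅x, y⁆) = ad ℂ g (⁅x, D y⁆ - ⁅y, D x⁆)
        rw [map_sub, ad_lie_eq, ad_lie_eq, ← hD, ← hD, ← hD, ad_lie_eq]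
        noncomm_ring }
  obtain ⟨w, hw⟩ := LieDerivation.IsKilling.exists_eq_ad D'
  have hw' : ∀ y, D y = ⁅w, y⁆ := by
    intro y
    change D' y = _
    rw [← hw, LieDerivation.ad_apply_apply]
  obtain ⟨c, hc⟩ := schur (B := A - ad ℂ g w) (by
    intro x
    have := hD x
    rw [hw', ad_lie_eq] at this
    rw [← sub_eq_zero] at this
    rw [← neg_eq_zero, ← this]
    noncomm_ring)
  have hm : A - ad ℂ g w ∈ invLie g := (invLie g).sub_mem hA (ad_mem_invLie w)
  obtain ⟨x, y, hxy⟩ := killing_ne_zero g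
  have h1 := invLie_skew hm x y
  rw [hc, hc, map_smul, map_smul, LinearMap.smul_apply, smul_eq_mul] at h1
  have hc0 : c = 0 := by
    have : c * killingForm ℂ g x y = 0 := by linear_combination h1 / 2
    exact (mul_eq_zero.mp this).resolve_right hxy
  refine ⟨w, ?_⟩
  rw [← sub_eq_zero]
  ext z
  rw [hc, hc0, zero_smul, LinearMap.zero_apply]

theorem preserver_pm {φ : g ≃ₗ[ℂ] g}
    (hφ : ∀ (k : ℕ) (x : g), LinearMap.trace ℂ g ((ad ℂ g (φ x)) ^ k) =
      LinearMap.trace ℂ g ((ad ℂ g x) ^ k)) :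
    ∃ σ : g ≃ₗ[ℂ] g, IsLieAut σ ∧ (φ = σ ∨ φ = LinearEquiv.neg ℂ * σ) := by
  have h : ∀ y : g, ∃ z : g, φ.conj (ad ℂ g y) = ad ℂ g z := fun y =>
    invLie_eq (conj_mem_invLie hφ (ad_mem_invLie y))
  choose θ hθ using h
  have hθ' : ∀ y x, φ ⁅y, x⁆ = ⁅θ y, φ x⁆ := by
    intro y x
    have := LinearMap.congr_fun (hθ y) (φ x)
    simpa [LinearEquiv.conj_apply] using this
  have hcm : ∀ A B : Module.End ℂ g, φ.conj (A * B) = φ.conj A * φ.conj B := by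
    intro A B
    ext x
    simp [LinearEquiv.conj_apply]
  have hθlie : ∀ x y, θ ⁅x, y⁆ = ⁅θ x, θ y⁆ := by
    intro x y
    apply ad_inj
    rw [ad_lie_eq, ← hθ, ← hθ, ← hθ, ad_lie_eq, map_sub, hcm, hcm]
  let Θ : g →ₗ[ℂ] g :=
    { toFun := θ
      map_add' := fun x y => ad_inj (by rw [map_add, ← hθ, ← hθ, ← hθ, map_add, map_add])
      map_smul' := fun c x => ad_inj (by
        rw [RingHom.id_apply, map_smul, ← hθ, ← hθ, map_smul, map_smul]) }
  have hinj : Function.Injective Θ := by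
    intro x y hxy
    apply ad_inj
    apply φ.conj.injective
    rw [hθ, hθ]
    exact congrArg _ hxy
  let σ : g ≃ₗ[ℂ] g := LinearEquiv.ofInjectiveEndo Θ hinj
  have hσ : ∀ x, σ x = θ x := fun x => rfl
  have hσa : IsLieAut σ := by
    intro x y
    rw [hσ, hσ, hσ, hθlie]
  obtain ⟨c, hc⟩ := schur (B := ((σ⁻¹ * φ : g ≃ₗ[ℂ] g) : g →ₗ[ℂ] g)) (by
    intro x
    ext y
    rw [comm_apply]
    change ⁅x, σ⁻¹ (φ y)⁆ - σ⁻¹ (φ ⁅x, y⁆) = 0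
    rw [hθ', ← hσ, hσa.inv, linEquiv_inv_apply, sub_self])
  have hφc : ∀ x, φ x = c • σ x := by
    intro x
    have := hc x
    change σ⁻¹ (φ x) = c • x at this
    rw [← map_smul, ← this, linEquiv_apply_inv]
  have hκ : ∀ x y, killingForm ℂ g (φ x) (φ y) = killingForm ℂ g x y := by
    intro x y
    have := trace_preserver_polar hφ 1 x y
    simpa [killing_eq_trace] using this
  have hσκ : ∀ x y, killingForm ℂ g (σ x) (σ y) = killingForm ℂ g x y := by
    intro x y
    have := trace_preserver_polar (fun k x => conj_trace_pow hσa x k) 1 x y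
    simpa [killing_eq_trace] using this
  obtain ⟨x, y, hxy⟩ := killing_ne_zero g
  have h1 := hκ x y
  rw [hφc, hφc, map_smul, map_smul, LinearMap.smul_apply, hσκ, smul_eq_mul, smul_eq_mul] at h1
  have hc2 : c ^ 2 = 1 := by
    apply mul_right_cancel₀ hxy
    linear_combination h1
  refine ⟨σ, hσa, ?_⟩
  rcases mul_self_eq_one_iff.mp ((sq c).symm.trans hc2) with h | h
  · left
    ext x
    rw [hφc, h, one_smul]
  · right
    ext x
    rw [hφc, h, neg_smul, one_smul]
    rfl

end Simple

set_option linter.unusedSectionVars false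

/-! ### A local chart -/

section Chart

open Filter Topology

variable {V : Type*} [NormedAddCommGroup V] [NormedSpace ℂ V] [FiniteDimensional ℂ V]

theorem list_prod_deriv {ι : Type*} [Fintype ι] (E : ι → ℂ → (V →L[ℂ] V)) (N : ι → (V →L[ℂ] V))
    (hE : ∀ i, HasStrictDerivAt (E i) (N i) 0) (hE0 : ∀ i, E i 0 = 1) (l : List ι) :
    HasStrictFDerivAt (fun s : ι → ℂ => (l.map fun i => E i (s i)).prod)
      ((l.map fun i => (ContinuousLinearMap.proj (R := ℂ) (φ := fun _ : ι => ℂ) i).smulRight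
        (N i)).sum) 0 := by
  induction l with
  | nil => simpa using hasStrictFDerivAt_const (1 : V →L[ℂ] V) (0 : ι → ℂ)
  | cons i l ih =>
    simp only [List.map_cons, List.prod_cons, List.sum_cons]
    have h1 : HasStrictFDerivAt (fun s : ι → ℂ => E i (s i))
        ((ContinuousLinearMap.proj (R := ℂ) (φ := fun _ : ι => ℂ) i).smulRight (N i)) 0 := by
      have h2 : HasStrictFDerivAt (fun s : ι → ℂ => s i)
        (ContinuousLinearMap.proj (R := ℂ) (φ := fun _ : ι => ℂ) i) 0 :=
        (ContinuousLinearMap.proj (R := ℂ) (φ := fun _ : ι => ℂ) i).hasStrictFDerivAt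
      have h3 := (show HasStrictDerivAt (E i) (N i) ((0 : ι → ℂ) i) from hE i).hasStrictFDerivAt.comp
        (0 : ι → ℂ) h2
      exact h3.congr_fderiv (by ext s v; simp)
    have h4 := h1.mul' ih
    refine h4.congr_fderiv ?_
    have e : (List.map (fun i => E i ((0 : ι → ℂ) i)) l).prod = 1 := by
      have : (fun i => E i ((0 : ι → ℂ) i)) = fun _ => 1 := by
        funext i; exact hE0 i
      rw [this]; simp
    have e1 : E i ((0 : ι → ℂ) i) = 1 := hE0 i
    rw [e, e1, add_comm]
    generalize (List.map (fun i => (ContinuousLinearMap.proj (R := ℂ) (φ := fun _ : ι => ℂ)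
      i).smulRight (N i)) l).sum = M
    refine ContinuousLinearMap.ext fun s => ?_
    rw [add_apply, add_apply,
      smul_apply, smul_apply, one_smul,
      MulOpposite.op_one, one_smul]

theorem truncExp_deriv (N : V →L[ℂ] V) (n : ℕ) (hn : 1 ≤ n) :
    HasStrictDerivAt (fun s : ℂ => ∑ k ∈ Finset.range (n + 1),
      (k.factorial : ℂ)⁻¹ • (s • N) ^ k) N 0 := by
  have h : HasStrictDerivAt (fun s : ℂ => ∑ k ∈ Finset.range (n + 1),
      s ^ k • ((k.factorial : ℂ)⁻¹ • N ^ k)) (∑ k ∈ Finset.range (n + 1),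
      ((k : ℂ) * (0 : ℂ) ^ (k - 1)) • ((k.factorial : ℂ)⁻¹ • N ^ k)) 0 := by
    refine HasStrictDerivAt.fun_sum fun k _ => ?_
    exact (hasStrictDerivAt_pow k (0 : ℂ)).smul_const ((k.factorial : ℂ)⁻¹ • N ^ k)
  convert h using 1
  · funext s
    refine Finset.sum_congr rfl fun k _ => ?_
    rw [smul_pow, smul_comm]
  · rw [Finset.sum_eq_single 1]
    · simp
    · intro k _ hk
      rcases k with _ | k
      · simp
      · have : k ≠ 0 := by omega
        simp [this]
    · intro h
      exact absurd (Finset.mem_range.mpr (by omega)) h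

theorem chart_exists {ι : Type*} [Fintype ι] (C : Submodule ℂ V)
    (U : (ι → ℂ) → (V →L[ℂ] V)) (U' : (ι → ℂ) →L[ℂ] (V →L[ℂ] V))
    (hU : HasStrictFDerivAt U U' 0) (hU0 : U 0 = 1) (h0 : C)
    (hbij : Function.Bijective (fun q : (ι → ℂ) × C => (q.2 : V) + U' q.1 h0)) :
    ∃ inv : V → (ι → ℂ) × C, DifferentiableAt ℂ inv h0 ∧ inv h0 = (0, h0) ∧
      ∀ᶠ y in 𝓝 (h0 : V), U (inv y).1 (inv y).2 = y := by
  have : CompleteSpace V := FiniteDimensional.complete ℂ V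
  have : CompleteSpace C := FiniteDimensional.complete ℂ C
  let Φ : (ι → ℂ) × C → V := fun q => U q.1 q.2
  let L : ((ι → ℂ) × C) →L[ℂ] V := C.subtypeL ∘L ContinuousLinearMap.snd ℂ (ι → ℂ) C +
      ((ContinuousLinearMap.apply ℂ V (h0 : V)) ∘L U') ∘L ContinuousLinearMap.fst ℂ (ι → ℂ) C
  have hL : ∀ q, L q = (q.2 : V) + U' q.1 h0 := fun q => rfl
  have hΦ : HasStrictFDerivAt Φ L (0, h0) := by
    have h1 : HasStrictFDerivAt (fun q : (ι → ℂ) × C => U q.1)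
        (U' ∘L ContinuousLinearMap.fst ℂ (ι → ℂ) C) (0, h0) :=
      HasStrictFDerivAt.comp (g := U) (f := Prod.fst) (x := ((0 : ι → ℂ), h0)) hU hasStrictFDerivAt_fst
    have h2 : HasStrictFDerivAt (fun q : (ι → ℂ) × C => (q.2 : V))
        (C.subtypeL ∘L ContinuousLinearMap.snd ℂ (ι → ℂ) C) (0, h0) :=
      HasStrictFDerivAt.comp (g := C.subtypeL) (f := Prod.snd) (x := ((0 : ι → ℂ), h0))
        C.subtypeL.hasStrictFDerivAt hasStrictFDerivAt_snd
    have h3 := h1.clm_apply h2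
    refine h3.congr_fderiv ?_
    ext q <;> simp [L, hU0]
  let e : ((ι → ℂ) × C) ≃L[ℂ] V :=
    (LinearEquiv.ofBijective L.toLinearMap hbij).toContinuousLinearEquiv
  have he : (e : ((ι → ℂ) × C) →L[ℂ] V) = L := by
    ext q <;> rfl
  rw [← he] at hΦ
  have hb : Φ (0, h0) = h0 := by simp [Φ, hU0]
  refine ⟨hΦ.localInverse, ?_, ?_, ?_⟩
  · have := hΦ.to_localInverse
    rw [hb] at this
    exact this.hasFDerivAt.differentiableAt
  · have := hΦ.localInverse_apply_image
    rwa [hb] at this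
  · have := hΦ.eventually_right_inverse
    rwa [hb] at this

end Chart

set_option linter.unusedSectionVars false

section ChartAbstract

open Filter Topology

/-- The ordered product of truncated exponentials. -/
def expProd {V : Type*} [AddCommGroup V] [Module ℂ V] {ι : Type*} [Fintype ι]
    (N : ι → Module.End ℂ V) (n : ℕ) (s : ι → ℂ) : Module.End ℂ V :=
  (Finset.univ.toList.map fun i => ∑ k ∈ Finset.range (n + 1),
    (k.factorial : ℂ)⁻¹ • (s i • N i) ^ k).prod

theorem chart_normed {V : Type*} [NormedAddCommGroup V] [NormedSpace ℂ V] [FiniteDimensional ℂ V]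
    {ι : Type*} [Fintype ι] (C : Submodule ℂ V) (N : ι → Module.End ℂ V) (n : ℕ) (hn : 1 ≤ n)
    (h0 : C)
    (hbij : Function.Bijective (fun q : (ι → ℂ) × C => (q.2 : V) + ∑ i, q.1 i • N i h0)) (v : V) :
    ∃ (a : ℂ → ι → ℂ) (b : ℂ → C), b 0 = h0 ∧
      (∀ᶠ s in 𝓝 (0 : ℂ), expProd N n (a s) (b s) = h0 + s • v) ∧
      ∀ l : C →ₗ[ℂ] ℂ, DifferentiableAt ℂ (fun s => l (b s)) 0 := by
  classical
  let T : Module.End ℂ V →ₐ[ℂ] (V →L[ℂ] V) :=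
    { toFun := LinearMap.toContinuousLinearMap
      map_one' := rfl
      map_mul' := fun A B => rfl
      map_zero' := rfl
      map_add' := fun A B => rfl
      commutes' := fun c => rfl }
  have hT : ∀ A x, T A x = A x := fun A x => rfl
  let E : ι → ℂ → (V →L[ℂ] V) := fun i c => ∑ k ∈ Finset.range (n + 1),
    (k.factorial : ℂ)⁻¹ • (c • T (N i)) ^ k
  have hE : ∀ i, HasStrictDerivAt (E i) (T (N i)) 0 := fun i => truncExp_deriv _ n hn
  have hE0 : ∀ i, E i 0 = 1 := by
    intro i
    simp only [E, zero_smul]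
    rw [Finset.sum_eq_single 0]
    · simp
    · intro k _ hk
      rw [zero_pow hk, smul_zero]
    · intro h
      exact absurd (Finset.mem_range.mpr (by omega)) h
  have hd := list_prod_deriv E (fun i => T (N i)) hE hE0 Finset.univ.toList
  have hU : ∀ s : ι → ℂ, (Finset.univ.toList.map fun i => E i (s i)).prod = T (expProd N n s) := by
    intro s
    rw [expProd, map_list_prod, List.map_map]
    congr 2
    funext i
    simp [E, map_sum, map_smul, map_pow]
  obtain ⟨inv, hi1, hi2, hi3⟩ := chart_exists C _ _ hd (by
      have : (fun i => E i ((0 : ι → ℂ) i)) = fun _ => 1 := by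
        funext i; exact hE0 i
      rw [this]; simp) h0 (by
      convert hbij using 2 with q
      rw [Finset.sum_map_toList]
      congr 1
      simp [hT])
  have hline : Tendsto (fun s : ℂ => (h0 : V) + s • v) (𝓝 0) (𝓝 (h0 : V)) := by
    have : Continuous (fun s : ℂ => (h0 : V) + s • v) := by fun_prop
    simpa using this.tendsto 0
  refine ⟨fun s => (inv (h0 + s • v)).1, fun s => (inv (h0 + s • v)).2, ?_, ?_, ?_⟩
  · simp [hi2]
  · filter_upwards [hline.eventually hi3] with s hs
    rw [hU] at hs
    exact hs
  · intro l
    have h1 : DifferentiableAt ℂ (fun s : ℂ => (h0 : V) + s • v) 0 := by fun_prop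
    have h2 : DifferentiableAt ℂ inv ((fun s : ℂ => (h0 : V) + s • v) 0) := by simpa using hi1
    have h3 := (h2.comp (0 : ℂ) h1).snd
    exact l.toContinuousLinearMap.differentiableAt.comp (0 : ℂ) h3

theorem chart_abstract {V : Type*} [AddCommGroup V] [Module ℂ V] [FiniteDimensional ℂ V]
    {ι : Type*} [Fintype ι] (C : Submodule ℂ V) (N : ι → Module.End ℂ V) (n : ℕ) (hn : 1 ≤ n)
    (h0 : C)
    (hbij : Function.Bijective (fun q : (ι → ℂ) × C => (q.2 : V) + ∑ i, q.1 i • N i h0)) (v : V) :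
    ∃ (a : ℂ → ι → ℂ) (b : ℂ → C), b 0 = h0 ∧
      (∀ᶠ s in 𝓝 (0 : ℂ), expProd N n (a s) (b s) = h0 + s • v) ∧
      ∀ l : C →ₗ[ℂ] ℂ, DifferentiableAt ℂ (fun s => l (b s)) 0 := by
  let e := (Module.finBasis ℂ V).equivFun
  let i1 : NormedAddCommGroup V := NormedAddCommGroup.induced V (Fin _ → ℂ) e e.injective
  let i2 : NormedSpace ℂ V := NormedSpace.induced ℂ V (Fin _ → ℂ) e
  exact @chart_normed V i1 i2 _ ι _ C N n hn h0 hbij v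

end ChartAbstract

section LieChart

open Filter Topology LieAlgebra LieModule

variable {g : Type*} [LieRing g] [LieAlgebra ℂ g] [FiniteDimensional ℂ g]
  [LieAlgebra.IsKilling ℂ g] {H : LieSubalgebra ℂ g} [H.IsCartanSubalgebra]

theorem exists_dual_root {β : Weight ℂ H g} {e : g} (he : e ∈ rootSpace H β) (he0 : e ≠ 0) :
    ∃ (γ : Weight ℂ H g) (y : g), y ∈ rootSpace H γ ∧ killingForm ℂ g e y ≠ 0 ∧
      (β + γ : H → ℂ) = 0 := by
  by_contra hc
  push Not at hc
  apply he0
  apply eq_zero_of_killing_root H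
  intro γ y hy
  by_contra hne
  exact hc γ y hy hne |>.elim (by
    by_contra h
    exact hne (killing_root_root he hy h))

theorem lie_chart (h0 : H) (hh : ∀ α : Weight ℂ H g, α.IsNonZero → α h0 ≠ 0) (v : g) :
    ∃ (u : ℂ → g ≃ₗ[ℂ] g) (b : ℂ → H), b 0 = h0 ∧ (∀ s, u s ∈ adjointGroup g) ∧
      (∀ᶠ s in 𝓝 (0 : ℂ), u s (b s) = h0 + s • v) ∧
      ∀ l : H →ₗ[ℂ] ℂ, DifferentiableAt ℂ (fun s => l (b s)) 0 := by
  classical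
  let ι := {α : Weight ℂ H g // α.IsNonZero}
  let _f : Fintype ι := Fintype.ofFinite ι
  have hex : ∀ i : ι, ∃ e ∈ rootSpace H i.1, e ≠ 0 := fun i => i.1.exists_ne_zero
  choose e he he0 using hex
  let n := Module.finrank ℂ g
  by_cases hn : 1 ≤ n
  swap
  · have : Module.finrank ℂ g = 0 := by change n = 0; omega
    have hs : Subsingleton g := Module.finrank_zero_iff.mp this
    refine ⟨fun _ => 1, fun _ => h0, rfl, fun _ => Subgroup.one_mem _,
      Eventually.of_forall fun s => Subsingleton.elim _ _, fun l => differentiableAt_const _⟩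
  have hform : ∀ q : (ι → ℂ) × H, (q.2 : g) + ∑ i, q.1 i • ad ℂ g (e i) h0 =
      q.2 - ∑ i, (q.1 i * i.1 h0) • e i := by
    intro q
    rw [sub_eq_add_neg, ← Finset.sum_neg_distrib]
    congr 1
    refine Finset.sum_congr rfl fun i _ => ?_
    rw [ad_apply, lie_root' (he i), smul_neg, smul_smul]
  have hbij : Function.Bijective
      (fun q : (ι → ℂ) × H.toSubmodule => (q.2 : g) + ∑ i, q.1 i • ad ℂ g (e i) h0) := by
    have hadd : ∀ q q' : (ι → ℂ) × H.toSubmodule,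
        ((q + q').2 : g) + ∑ i, (q + q').1 i • ad ℂ g (e i) h0 =
        ((q.2 : g) + ∑ i, q.1 i • ad ℂ g (e i) h0) +
        ((q'.2 : g) + ∑ i, q'.1 i • ad ℂ g (e i) h0) := by
      intro q q'
      simp only [Prod.snd_add, Prod.fst_add, Pi.add_apply, add_smul, Finset.sum_add_distrib,
        Submodule.coe_add]
      abel
    let F : (ι → ℂ) × H.toSubmodule →+ g :=
      { toFun := fun q => (q.2 : g) + ∑ i, q.1 i • ad ℂ g (e i) h0
        map_zero' := by simp
        map_add' := hadd }
    change Function.Bijective F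
    constructor
    · rw [injective_iff_map_eq_zero]
      intro q hq
      have hq' : (q.2 : g) = ∑ i, (q.1 i * i.1 h0) • e i := by
        have := (hform q).symm.trans hq
        exact sub_eq_zero.mp this
      have hs : ∀ j, q.1 j = 0 := by
        intro j
        obtain ⟨γ, y, hy, hκ, hsum⟩ := exists_dual_root (he j) (he0 j)
        have h1 := congrArg (fun z => killingForm ℂ g z y) hq'
        simp only [map_sum, map_smul, LinearMap.sum_apply, LinearMap.smul_apply] at h1
        rw [Finset.sum_eq_single j] at h1
        · have h2 : killingForm ℂ g (q.2 : g) y = 0 := by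
            refine LieAlgebra.killingForm_apply_eq_zero_of_mem_rootSpace_of_add_ne_zero ℂ g H
              (mem_zero_root.mpr q.2.2) hy ?_
            rw [zero_add]
            intro hγ
            rw [hγ, add_zero] at hsum
            exact j.2 hsum
          rw [h2, smul_eq_mul] at h1
          have h3 := (mul_eq_zero.mp h1.symm).resolve_right hκ
          exact (mul_eq_zero.mp h3).resolve_right (hh j.1 j.2)
        · intro i _ hij
          rw [killing_root_root (he i) hy, smul_zero]
          intro h4
          apply hij
          have : (i.1 : H → ℂ) = j.1 := by
            rw [← hsum] at h4
            exact add_right_cancel h4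
          exact Subtype.ext (DFunLike.coe_injective this)
        · intro h
          exact absurd (Finset.mem_univ j) h
      have h2 : q.2 = 0 := by
        ext
        rw [hq']
        simp [hs]
      exact Prod.ext (funext hs) h2
    · intro x
      refine weight_induction H (p := fun x => ∃ q, F q = x) ⟨0, map_zero F⟩ ?_ ?_ x
      · rintro x y ⟨q, rfl⟩ ⟨q', rfl⟩
        exact ⟨q + q', map_add F q q'⟩
      · intro α x hx
        by_cases hα : α.IsZero
        · rw [hα] at hx
          refine ⟨(0, ⟨x, mem_zero_root.mp hx⟩), ?_⟩
          simp [F]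
        · obtain ⟨c, rfl⟩ := root_mem_span hα (he ⟨α, hα⟩) (he0 ⟨α, hα⟩) hx
          refine ⟨(Pi.single ⟨α, hα⟩ (-c * (α h0)⁻¹), 0), ?_⟩
          refine (hform (Pi.single ⟨α, hα⟩ (-c * (α h0)⁻¹), 0)).trans ?_
          rw [Finset.sum_eq_single ⟨α, hα⟩]
          · simp [hh α hα]
          · intro j _ hj
            simp [Pi.single_eq_of_ne hj]
          · intro h
            exact absurd (Finset.mem_univ _) h
  obtain ⟨a, b, hb0, hb1, hb2⟩ := chart_abstract H.toSubmodule (fun i => ad ℂ g (e i)) n hn h0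
    hbij v
  have hnil : ∀ (i : ι) (c : ℂ), IsNilpotent (ad ℂ g (c • e i)) := fun i c =>
    LieAlgebra.isNilpotent_ad_of_mem_rootSpace H i.2 ((rootSpace H i.1).smul_mem c (he i))
  choose w hw hwe using fun (i : ι) (c : ℂ) => exists_mem_adjointGroup (hnil i c)
  refine ⟨fun s => (Finset.univ.toList.map fun i => w i (a s i)).prod, b, hb0, ?_, ?_, hb2⟩
  · intro s
    refine Subgroup.list_prod_mem _ ?_
    intro x hx
    obtain ⟨i, -, rfl⟩ := List.mem_map.mp hx
    exact hw _ _
  · filter_upwards [hb1] with s hs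
    rw [← hs, expProd]
    generalize (Finset.univ.toList : List ι) = l
    have : (((l.map fun i => w i (a s i)).prod : g ≃ₗ[ℂ] g) : g →ₗ[ℂ] g) =
        (l.map fun i => ∑ k ∈ Finset.range (n + 1),
          (k.factorial : ℂ)⁻¹ • (a s i • ad ℂ g (e i)) ^ k).prod := by
      induction l with
      | nil => rfl
      | cons i l ih =>
        rw [List.map_cons, List.prod_cons, List.map_cons, List.prod_cons, ← ih, ← map_smul]
        have := hwe i (a s i)
        rw [endExp] at this
        rw [← this]
        rfl
    exact LinearMap.congr_fun this (b s : g)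

end LieChart

set_option linter.unusedSectionVars false

section PolyFun

variable {V : Type*} [AddCommGroup V] [Module ℂ V]

theorem IsPolyFun.linear (l : V →ₗ[ℂ] ℂ) : IsPolyFun (fun x => l x) :=
  Algebra.subset_adjoin ⟨l, rfl⟩

theorem IsPolyFun.const (c : ℂ) : IsPolyFun (fun _ : V => c) :=
  Subalgebra.algebraMap_mem _ c

theorem IsPolyFun.add {f h : V → ℂ} (hf : IsPolyFun f) (hh : IsPolyFun h) :
    IsPolyFun (fun x => f x + h x) := Subalgebra.add_mem _ hf hh

theorem IsPolyFun.mul {f h : V → ℂ} (hf : IsPolyFun f) (hh : IsPolyFun h) :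
    IsPolyFun (fun x => f x * h x) := Subalgebra.mul_mem _ hf hh

theorem IsPolyFun.sum {ι : Type*} (s : Finset ι) {f : ι → V → ℂ} (hf : ∀ i, IsPolyFun (f i)) :
    IsPolyFun (fun x => ∑ i ∈ s, f i x) := by
  have h : (fun x => ∑ i ∈ s, f i x) = ∑ i ∈ s, f i := by
    ext x
    simp
  rw [h]
  exact Subalgebra.sum_mem _ fun i _ => hf i

theorem IsPolyFun.line {f : V → ℂ} (hf : IsPolyFun f) (x v : V) :
    ∃ P : Polynomial ℂ, ∀ s : ℂ, f (x + s • v) = P.eval s := by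
  unfold IsPolyFun at hf
  induction hf using Algebra.adjoin_induction with
  | mem f hf =>
    obtain ⟨l, rfl⟩ := hf
    refine ⟨Polynomial.C (l x) + Polynomial.X * Polynomial.C (l v), fun s => ?_⟩
    simp
    ring
  | algebraMap c => exact ⟨Polynomial.C c, fun s => by simp⟩
  | add f h _ _ hf hh =>
    obtain ⟨P, hP⟩ := hf
    obtain ⟨Q, hQ⟩ := hh
    exact ⟨P + Q, fun s => by simp [hP, hQ]⟩
  | mul f h _ _ hf hh =>
    obtain ⟨P, hP⟩ := hf
    obtain ⟨Q, hQ⟩ := hh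
    exact ⟨P * Q, fun s => by simp [hP, hQ]⟩

theorem IsPolyFun.mvPoly {ι : Type*} (c : ι → V →ₗ[ℂ] ℂ) (p : MvPolynomial ι ℂ) :
    IsPolyFun (fun x => MvPolynomial.eval (fun i => c i x) p) := by
  induction p using MvPolynomial.induction_on with
  | C a => simpa using IsPolyFun.const a
  | add p q hp hq => simpa using hp.add hq
  | mul_X p i hp => simpa using hp.mul (IsPolyFun.linear (c i))

end PolyFun

section Regular

variable {g : Type*} [LieRing g] [LieAlgebra ℂ g] [FiniteDimensional ℂ g]

open LieAlgebra LieModule Module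

theorem isPolyFun_ad_pow (k : ℕ) (l : g →ₗ[ℂ] ℂ) (y : g) :
    IsPolyFun (fun x : g => l ((ad ℂ g x ^ k) y)) := by
  induction k generalizing y with
  | zero => simpa using IsPolyFun.const (l y)
  | succ k ih =>
    let b := Module.finBasis ℂ g
    have h : (fun x : g => l ((ad ℂ g x ^ (k + 1)) y)) = fun x : g =>
        ∑ i, (b.coord i ∘ₗ (ad ℂ g (-y))) x * l ((ad ℂ g x ^ k) (b i)) := by
      ext x
      rw [pow_succ, Module.End.mul_apply]
      conv_lhs => rw [← b.sum_repr (ad ℂ g x y)]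
      rw [map_sum, map_sum]
      refine Finset.sum_congr rfl fun i _ => ?_
      rw [map_smul, map_smul, smul_eq_mul]
      congr 1
      simp only [LinearMap.comp_apply, ad_apply, neg_lie, lie_skew]
      rfl
    rw [h]
    exact IsPolyFun.sum _ fun i => (IsPolyFun.linear _).mul (ih _)

theorem isPolyFun_trace (k : ℕ) :
    IsPolyFun (fun x : g => LinearMap.trace ℂ g (ad ℂ g x ^ k)) := by
  let b := Module.finBasis ℂ g
  have h : (fun x : g => LinearMap.trace ℂ g (ad ℂ g x ^ k)) = fun x : g =>
      ∑ i, b.coord i ((ad ℂ g x ^ k) (b i)) := by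
    ext x
    rw [LinearMap.trace_eq_matrix_trace ℂ b, Matrix.trace]
    refine Finset.sum_congr rfl fun i _ => ?_
    simp [LinearMap.toMatrix_apply]
  rw [h]
  exact IsPolyFun.sum _ fun i => isPolyFun_ad_pow k _ _

/-- The discriminant: the lowest non-vanishing coefficient of the characteristic polynomial. -/
def disc (x : g) : ℂ := (ad ℂ g x).charpoly.coeff (LieAlgebra.rank ℂ g)

theorem isRegular_iff_disc (x : g) : IsRegular ℂ x ↔ disc x ≠ 0 := Iff.rfl

theorem isPolyFun_disc : IsPolyFun (disc : g → ℂ) := by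
  let b := Module.finBasis ℂ g
  let φ : g →ₗ[ℂ] Module.End ℂ g :=
    { toFun := fun x => ad ℂ g x
      map_add' := fun x y => map_add _ x y
      map_smul' := fun c x => map_smul _ c x }
  have h : (disc : g → ℂ) = fun x => MvPolynomial.eval (fun i => b.coord i x)
      ((LinearMap.polyCharpoly φ b).coeff (LieAlgebra.rank ℂ g)) := by
    ext x
    have := LinearMap.polyCharpoly_coeff_eval φ b x (LieAlgebra.rank ℂ g)
    exact this.symm
  rw [h]
  exact IsPolyFun.mvPoly _ _

theorem disc_aut {u : g ≃ₗ[ℂ] g} (hu : IsLieAut u) (x : g) : disc (u x) = disc x := by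
  unfold disc
  rw [hu.ad_conj, LinearEquiv.charpoly_conj]

theorem finite_nonregular_line {x v : g} (h : ∃ s : ℂ, IsRegular ℂ (x + s • v)) :
    {s : ℂ | ¬ IsRegular ℂ (x + s • v)}.Finite := by
  obtain ⟨P, hP⟩ := (isPolyFun_disc (g := g)).line x v
  have hP0 : P ≠ 0 := by
    rintro rfl
    obtain ⟨s, hs⟩ := h
    exact (isRegular_iff_disc _).mp hs (by simpa using hP s)
  refine (P.rootSet_finite ℂ).subset fun s hs => ?_
  rw [Polynomial.mem_rootSet]
  refine ⟨hP0, ?_⟩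
  have : disc (x + s • v) = 0 := by
    by_contra hc
    exact hs hc
  simpa [hP] using this

theorem engel_isCartan {x : g} (hx : IsRegular ℂ x) :
    (LieSubalgebra.engel ℂ x).IsCartanSubalgebra := by
  have h : (finrank ℂ g : Cardinal) ≤ Cardinal.mk ℂ :=
    Cardinal.natCast_le_aleph0.trans (Cardinal.infinite_iff.mp inferInstance)
  refine ⟨?_, LieSubalgebra.normalizer_engel _ _⟩
  apply LieSubalgebra.isNilpotent_of_forall_le_engel
  intro y hy
  set Ex : {LieSubalgebra.engel ℂ z | z ∈ LieSubalgebra.engel ℂ x} :=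
    ⟨LieSubalgebra.engel ℂ x, x, LieSubalgebra.self_mem_engel _ _, rfl⟩
  suffices IsBot Ex from @this ⟨LieSubalgebra.engel ℂ y, y, hy, rfl⟩
  apply engel_isBot_of_isMin h (LieSubalgebra.engel ℂ x) Ex le_rfl
  rintro ⟨_, y, hy, rfl⟩ hyx
  suffices finrank ℂ (LieSubalgebra.engel ℂ x) ≤ finrank ℂ (LieSubalgebra.engel ℂ y) by
    suffices LieSubalgebra.engel ℂ y = LieSubalgebra.engel ℂ x from this.ge
    apply LieSubalgebra.toSubmodule_injective
    exact Submodule.eq_of_le_of_finrank_le hyx this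
  rw [(isRegular_iff_finrank_engel_eq_rank ℂ x).mp hx]
  apply rank_le_finrank_engel

theorem mem_engel_aut {u : g ≃ₗ[ℂ] g} (hu : IsLieAut u) (x z : g) :
    u z ∈ LieSubalgebra.engel ℂ (u x) ↔ z ∈ LieSubalgebra.engel ℂ x := by
  rw [LieSubalgebra.mem_engel_iff, LieSubalgebra.mem_engel_iff]
  refine exists_congr fun n => ?_
  rw [hu.ad_conj, ← lconj_pow, LinearEquiv.conj_apply_apply, u.symm_apply_apply]
  exact u.map_eq_zero_iff

end Regular

set_option linter.unusedSectionVars false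

section Conjugacy

variable {g : Type*} [LieRing g] [LieAlgebra ℂ g] [FiniteDimensional ℂ g]
  [LieAlgebra.IsKilling ℂ g] {H : LieSubalgebra ℂ g} [H.IsCartanSubalgebra]

open LieAlgebra LieModule Module Filter Topology

theorem cartan_comm {h h' : g} (hh : h ∈ H) (hh' : h' ∈ H) : ⁅h, h'⁆ = 0 := by
  have := trivial_lie_zero H H ⟨h, hh⟩ ⟨h', hh'⟩
  simpa [Subtype.ext_iff] using! this

theorem mem_cartan_of_perp {x : g} (hx : ∀ α : Weight ℂ H g, α.IsNonZero →
    ∀ y ∈ rootSpace H α, killingForm ℂ g x y = 0) : x ∈ H := by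
  have h1 : ∀ h' : H, ⁅(h' : g), x⁆ = 0 := by
    intro h'
    apply eq_zero_of_killing_root H
    intro α y hy
    rw [killing_invariant, lie_root hy, map_smul]
    by_cases hα : α.IsZero
    · rw [weight_isZero_apply hα]; simp
    · rw [hx α hα y hy]; simp
  have h2 : x ∈ H.normalizer := by
    rw [LieSubalgebra.mem_normalizer_iff]
    intro y hy
    rw [← lie_skew, h1 ⟨y, hy⟩]
    simp
  rwa [LieSubalgebra.IsCartanSubalgebra.self_normalizing] at h2

theorem cartan_le_engel (h : H) : H ≤ LieSubalgebra.engel ℂ (h : g) := by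
  intro x hx
  rw [LieSubalgebra.mem_engel_iff]
  exact ⟨1, by simpa using cartan_comm h.2 hx⟩

theorem engel_eq_of_weight (h : H) (hh : ∀ α : Weight ℂ H g, α.IsNonZero → α h ≠ 0) :
    LieSubalgebra.engel ℂ (h : g) = H := by
  refine le_antisymm (fun x hx => ?_) (cartan_le_engel h)
  rw [LieSubalgebra.mem_engel_iff] at hx
  obtain ⟨n, hn⟩ := hx
  apply mem_cartan_of_perp
  intro α hα y hy
  have key : ∀ (m : ℕ) (z : g), killingForm ℂ g ((ad ℂ g (h : g) ^ m) z) y =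
      (-(α h)) ^ m * killingForm ℂ g z y := by
    intro m
    induction m with
    | zero => intro z; simp
    | succ m ih =>
      intro z
      rw [pow_succ, Module.End.mul_apply, ih, ad_apply, killing_invariant, lie_root hy, map_smul,
        smul_eq_mul, pow_succ]
      ring
  have h1 := key n x
  rw [hn] at h1
  simp only [map_zero, LinearMap.zero_apply] at h1
  rcases mul_eq_zero.mp h1.symm with h2 | h2
  · exact absurd h2 (pow_ne_zero _ (neg_ne_zero.mpr (hh α hα)))
  · exact h2

theorem weight_ne_of_engel_le (h : H) (hE : LieSubalgebra.engel ℂ (h : g) ≤ H)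
    (α : Weight ℂ H g) (hα : α.IsNonZero) : α h ≠ 0 := by
  intro h0
  obtain ⟨e, he, he0⟩ := α.exists_ne_zero
  have h1 : e ∈ H := by
    apply hE
    rw [LieSubalgebra.mem_engel_iff]
    exact ⟨1, by simp [lie_root he, h0]⟩
  apply hα
  ext h'
  have h2 := lie_root he h'
  rw [cartan_comm h'.2 h1] at h2
  simpa [he0] using h2.symm

theorem near_regular (h0 : H) (hh : ∀ α : Weight ℂ H g, α.IsNonZero → α h0 ≠ 0) :
    ∃ b : H, IsRegular ℂ (b : g) := by
  obtain ⟨y, hy⟩ := LieAlgebra.exists_isRegular ℂ g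
  obtain ⟨u, b, -, hu, hb, -⟩ := lie_chart h0 hh (y - h0)
  have hfin := finite_nonregular_line (x := (h0 : g)) (v := y - h0) ⟨1, by simpa using hy⟩
  have h1 : ∀ᶠ s in 𝓝[≠] (0 : ℂ), IsRegular ℂ ((h0 : g) + s • (y - h0)) := by
    have h5 := (hfin.subset (Set.sdiff_subset (t := {(0 : ℂ)}))).isClosed.isOpen_compl
    have h6 := h5.mem_nhds (x := 0) (by simp)
    filter_upwards [nhdsWithin_le_nhds h6, self_mem_nhdsWithin] with s hs hs0
    by_contra hc
    exact hs ⟨hc, hs0⟩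
  obtain ⟨s, hs1, hs2⟩ := (h1.and (nhdsWithin_le_nhds hb)).exists
  refine ⟨b s, ?_⟩
  rw [isRegular_iff_disc, ← disc_aut (adjointGroup_isLieAut (hu s)), hs2]
  exact hs1

theorem finrank_cartan (H : LieSubalgebra ℂ g) [H.IsCartanSubalgebra] :
    finrank ℂ H = LieAlgebra.rank ℂ g := by
  obtain ⟨h0, -, hh, -⟩ := exists_generic (H := H) (fun i : Empty => i.elim) (fun i => i.elim)
  obtain ⟨b, hb⟩ := near_regular h0 hh
  refine le_antisymm ?_ ?_
  · rw [← (isRegular_iff_finrank_engel_eq_rank ℂ (b : g)).mp hb]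
    exact Submodule.finrank_mono (cartan_le_engel b)
  · have := rank_le_finrank_engel ℂ (h0 : g)
    rwa [engel_eq_of_weight h0 hh] at this

theorem regular_iff_weight (h : H) : IsRegular ℂ (h : g) ↔
    ∀ α : Weight ℂ H g, α.IsNonZero → α h ≠ 0 := by
  constructor
  · intro hr
    refine weight_ne_of_engel_le h (le_of_eq ?_)
    apply LieSubalgebra.toSubmodule_injective
    refine (Submodule.eq_of_le_of_finrank_le (cartan_le_engel h) ?_).symm
    have h1 := (isRegular_iff_finrank_engel_eq_rank ℂ (h : g)).mp hr
    have h2 := finrank_cartan H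
    exact (h1.trans h2.symm).le
  · intro hw
    rw [isRegular_iff_finrank_engel_eq_rank, engel_eq_of_weight h hw, finrank_cartan]

theorem engel_of_regular (h : H) (hr : IsRegular ℂ (h : g)) :
    LieSubalgebra.engel ℂ (h : g) = H :=
  engel_eq_of_weight h ((regular_iff_weight h).mp hr)

theorem isRegular_aut {u : g ≃ₗ[ℂ] g} (hu : IsLieAut u) (x : g) :
    IsRegular ℂ (u x) ↔ IsRegular ℂ x := by
  rw [isRegular_iff_disc, isRegular_iff_disc, disc_aut hu]

/-- Two elements whose Engel subalgebras are conjugate under the adjoint group. -/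
def EngelConj (x y : g) : Prop :=
  ∃ u ∈ adjointGroup g, ∀ z, u z ∈ LieSubalgebra.engel ℂ y ↔ z ∈ LieSubalgebra.engel ℂ x

theorem EngelConj.trans {x y z : g} (h1 : EngelConj x y) (h2 : EngelConj y z) :
    EngelConj x z := by
  obtain ⟨u, hu, h1⟩ := h1
  obtain ⟨w, hw, h2⟩ := h2
  exact ⟨w * u, mul_mem hw hu, fun a => (h2 (u a)).trans (h1 a)⟩

theorem EngelConj.symm {x y : g} (h1 : EngelConj x y) : EngelConj y x := by
  obtain ⟨u, hu, h1⟩ := h1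
  refine ⟨u⁻¹, inv_mem hu, fun a => ?_⟩
  rw [← h1, linEquiv_apply_inv]

theorem engelConj_near {x : g} (hx : IsRegular ℂ x) (v : g) :
    ∀ᶠ s in 𝓝 (0 : ℂ), IsRegular ℂ (x + s • v) → EngelConj x (x + s • v) := by
  have hC := engel_isCartan hx
  let h0 : LieSubalgebra.engel ℂ x := ⟨x, LieSubalgebra.self_mem_engel ℂ x⟩
  obtain ⟨u, b, -, hu, hb, -⟩ := lie_chart h0 ((regular_iff_weight h0).mp hx) v
  filter_upwards [hb] with s hs hr
  refine ⟨u s, hu s, fun z => ?_⟩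
  have hs' : x + s • v = u s (b s) := hs.symm
  have ha := adjointGroup_isLieAut (hu s)
  rw [hs', mem_engel_aut ha, engel_of_regular (b s)]
  rwa [hs', isRegular_aut ha] at hr

theorem engelConj {x y : g} (hx : IsRegular ℂ x) (hy : IsRegular ℂ y) : EngelConj x y := by
  let v := y - x
  have hfin := finite_nonregular_line (x := x) (v := v) ⟨0, by simpa using hx⟩
  have hconn := (hfin.countable.isConnected_compl_of_one_lt_rank
    (by simp) : IsConnected _).isPreconnected
  have := hconn.induction₂ (fun s s' : ℂ => EngelConj (x + s • v) (x + s' • v))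
    (x := 0) (y := 1) ?_ ?_ ?_ (by simpa using hx) (by simpa [v] using hy)
  · simpa [v] using this
  · intro s hs
    have hs' : IsRegular ℂ (x + s • v) := not_not.mp hs
    have h1 := engelConj_near hs' v
    have h2 : Tendsto (fun s' : ℂ => s' - s) (𝓝 s) (𝓝 0) := by
      have : Continuous fun s' : ℂ => s' - s := by fun_prop
      simpa using this.tendsto s
    filter_upwards [nhdsWithin_le_nhds (h2.eventually h1), self_mem_nhdsWithin] with s' h3 h4
    have h5 : x + s • v + (s' - s) • v = x + s' • v := by
      rw [sub_smul]; abel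
    rw [h5] at h3
    exact h3 (not_not.mp h4)
  · intro a b c _ _ _ h1 h2
    exact h1.trans h2
  · intro a b _ _ h
    exact h.symm

variable (H) in
theorem exists_conj_cartan {x : g} (hx : IsRegular ℂ x) : ∃ u ∈ adjointGroup g, u x ∈ H := by
  obtain ⟨h0, -, hh, -⟩ := exists_generic (H := H) (fun i : Empty => i.elim) (fun i => i.elim)
  obtain ⟨u, hu, h⟩ := engelConj hx ((regular_iff_weight h0).mpr hh)
  refine ⟨u, hu, ?_⟩
  have := (h x).mpr (LieSubalgebra.self_mem_engel ℂ x)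
  rwa [engel_eq_of_weight h0 hh] at this

/-- If a Lie automorphism moves a regular element of `H` into `H`, it preserves `H`. -/
theorem preserves_of_regular {u : g ≃ₗ[ℂ] g} (hu : IsLieAut u) {h : H} (hr : IsRegular ℂ (h : g))
    (huh : u h ∈ H) (z : g) : u z ∈ H ↔ z ∈ H := by
  have h1 := mem_engel_aut hu (h : g) z
  have h2 := engel_of_regular h hr
  have h3 := engel_of_regular (⟨u h, huh⟩ : H) ((isRegular_aut hu _).mpr hr)
  simp only at h3
  rwa [h2, h3] at h1

variable (H) in
theorem exists_preserves {σ : g ≃ₗ[ℂ] g} (hσ : IsLieAut σ) :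
    ∃ u ∈ adjointGroup g, ∀ z, (u * σ) z ∈ H ↔ z ∈ H := by
  obtain ⟨h0, -, hh, -⟩ := exists_generic (H := H) (fun i : Empty => i.elim) (fun i => i.elim)
  have hr := (regular_iff_weight h0).mpr hh
  obtain ⟨u, hu, h⟩ := exists_conj_cartan H ((isRegular_aut hσ _).mpr hr)
  exact ⟨u, hu, preserves_of_regular ((adjointGroup_isLieAut hu).mul hσ) hr h⟩

end Conjugacy

set_option linter.unusedSectionVars false

section NegInv

variable {g : Type*} [LieRing g] [LieAlgebra ℂ g] [FiniteDimensional ℂ g]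

open LieAlgebra LieModule Module

theorem polyFun_ext_regular {f k : g → ℂ} (hf : IsPolyFun f) (hk : IsPolyFun k)
    (h : ∀ x, IsRegular ℂ x → f x = k x) (x : g) : f x = k x := by
  obtain ⟨y, hy⟩ := LieAlgebra.exists_isRegular ℂ g
  have hfin := finite_nonregular_line (x := x) (v := y - x) ⟨1, by simpa using hy⟩
  obtain ⟨P, hP⟩ := hf.line x (y - x)
  obtain ⟨Q, hQ⟩ := hk.line x (y - x)
  have hPQ : P = Q := by
    apply Polynomial.eq_of_infinite_eval_eq
    refine hfin.infinite_compl.mono fun s hs => ?_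
    have hs' : IsRegular ℂ (x + s • (y - x)) := not_not.mp hs
    have := h _ hs'
    rwa [hP, hQ] at this
  have h1 := hP 0
  have h2 := hQ 0
  rw [zero_smul, add_zero] at h1 h2
  rw [h1, h2, hPQ]

theorem IsPolyFun.comp {V : Type*} [AddCommGroup V] [Module ℂ V] {f : V → ℂ} (hf : IsPolyFun f)
    {W : Type*} [AddCommGroup W] [Module ℂ W] (A : W →ₗ[ℂ] V) :
    IsPolyFun (fun x => f (A x)) := by
  unfold IsPolyFun at hf
  induction hf using Algebra.adjoin_induction with
  | mem f hf =>
    obtain ⟨l, rfl⟩ := hf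
    exact IsPolyFun.linear (l ∘ₗ A)
  | algebraMap c => exact IsPolyFun.const c
  | add f h _ _ hf hh => exact hf.add hh
  | mul f h _ _ hf hh => exact hf.mul hh

theorem neg_mem_primeGroup [LieAlgebra.IsKilling ℂ g] (H : LieSubalgebra ℂ g)
    [H.IsCartanSubalgebra] {ψ : g ≃ₗ[ℂ] g} (hψ : ψ ∈ adjointGroup g) (hψt : ∀ x ∈ H, ψ x = -x) :
    (LinearEquiv.neg ℂ : g ≃ₗ[ℂ] g) ∈ primeGroup (adjointGroup g) := by
  intro f hf hinv v
  refine polyFun_ext_regular (hf.comp (LinearEquiv.neg ℂ : g ≃ₗ[ℂ] g).toLinearMap) hf ?_ v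
  intro x hx
  obtain ⟨u, hu, hux⟩ := exists_conj_cartan H hx
  change f (-x) = f x
  rw [← hinv u hu (-x), map_neg, ← hψt _ hux, hinv ψ hψ, hinv u hu]

end NegInv

set_option linter.unusedSectionVars false

section Growth

open Filter Topology

/-- Polynomial growth of order `D`. -/
def PolyGrowth (D : ℕ) (f : ℂ → ℂ) : Prop := ∃ C : ℝ, ∀ s, ‖f s‖ ≤ C * (1 + ‖s‖) ^ D

theorem PolyGrowth.mul {D E : ℕ} {f h : ℂ → ℂ} (hf : PolyGrowth D f) (hh : PolyGrowth E h) :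
    PolyGrowth (D + E) (fun s => f s * h s) := by
  obtain ⟨C, hC⟩ := hf
  obtain ⟨B, hB⟩ := hh
  refine ⟨C * B, fun s => ?_⟩
  rw [norm_mul, pow_add, mul_mul_mul_comm]
  exact mul_le_mul (hC s) (hB s) (norm_nonneg _) ((norm_nonneg _).trans (hC s))

theorem PolyGrowth.mono {D E : ℕ} (hDE : D ≤ E) {f : ℂ → ℂ} (hf : PolyGrowth D f) :
    PolyGrowth E f := by
  obtain ⟨C, hC⟩ := hf
  have hC0 : 0 ≤ C := by
    have := (norm_nonneg _).trans (hC 0)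
    simpa using this
  refine ⟨C, fun s => (hC s).trans ?_⟩
  gcongr
  have := norm_nonneg s
  linarith

theorem PolyGrowth.add {D : ℕ} {f h : ℂ → ℂ} (hf : PolyGrowth D f) (hh : PolyGrowth D h) :
    PolyGrowth D (fun s => f s + h s) := by
  obtain ⟨C, hC⟩ := hf
  obtain ⟨B, hB⟩ := hh
  refine ⟨C + B, fun s => ?_⟩
  rw [add_mul]
  exact (norm_add_le _ _).trans (add_le_add (hC s) (hB s))

theorem PolyGrowth.const (c : ℂ) : PolyGrowth 0 (fun _ => c) := ⟨‖c‖, fun s => by simp⟩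

theorem PolyGrowth.prod {ι : Type*} (t : Finset ι) {f : ι → ℂ → ℂ} (hf : ∀ i, PolyGrowth 1 (f i)) :
    PolyGrowth t.card (fun s => ∏ i ∈ t, f i s) := by
  classical
  induction t using Finset.induction_on with
  | empty => simpa using PolyGrowth.const 1
  | insert a t ha ih =>
    simp only [Finset.prod_insert ha, Finset.card_insert_of_notMem ha]
    rw [add_comm]
    exact (hf a).mul ih

theorem polyGrowth_id : PolyGrowth 1 (fun s => s) := ⟨1, fun s => by simp⟩

theorem polynomial_growth (P : Polynomial ℂ) : PolyGrowth P.natDegree (fun s => P.eval s) := by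
  have key : ∀ (n : ℕ), ∀ k ≤ n, PolyGrowth n (fun s : ℂ => s ^ k) := by
    intro n k hk
    refine PolyGrowth.mono hk ⟨1, fun s => ?_⟩
    rw [norm_pow, one_mul]
    gcongr
    linarith
  have h1 : (fun s => P.eval s) = fun s => ∑ i ∈ Finset.range (P.natDegree + 1), P.coeff i * s ^ i := by
    ext s
    rw [Polynomial.eval_eq_sum_range]
  rw [h1]
  have h2 : ∀ t : Finset ℕ, (∀ i ∈ t, i ≤ P.natDegree) →
      PolyGrowth P.natDegree (fun s => ∑ i ∈ t, P.coeff i * s ^ i) := by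
    intro t
    induction t using Finset.induction_on with
    | empty => intro _; simpa using (PolyGrowth.const 0).mono (Nat.zero_le _)
    | insert a t ha ih =>
      intro h
      simp only [Finset.sum_insert ha]
      refine PolyGrowth.add ?_ (ih fun i hi => h i (Finset.mem_insert_of_mem hi))
      simpa using (PolyGrowth.const _).mul (key P.natDegree a (h a (Finset.mem_insert_self _ _)))
  exact h2 _ fun i hi => by
    rw [Finset.mem_range] at hi
    omega

theorem liouville_growth (D : ℕ) {f : ℂ → ℂ} (hf : Differentiable ℂ f) (hg : PolyGrowth D f) :
    ∃ P : Polynomial ℂ, P.natDegree ≤ D ∧ ∀ s, f s = P.eval s := by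
  induction D generalizing f with
  | zero =>
    obtain ⟨C, hC⟩ := hg
    have hb : Bornology.IsBounded (Set.range f) := by
      rw [isBounded_iff_forall_norm_le]
      refine ⟨C, ?_⟩
      rintro _ ⟨s, rfl⟩
      simpa using hC s
    exact ⟨Polynomial.C (f 0), by simp, fun s => by
      simpa using hf.apply_eq_apply_of_bounded hb s 0⟩
  | succ D ih =>
    have hd : Differentiable ℂ (dslope f 0) := by
      have := (Complex.differentiableOn_dslope (f := f) (s := Set.univ) (c := 0) univ_mem).mpr
        hf.differentiableOn
      exact differentiableOn_univ.mp this
    have hgr : PolyGrowth D (dslope f 0) := by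
      obtain ⟨C, hC⟩ := hg
      have hC0 : 0 ≤ C := by
        have := (norm_nonneg _).trans (hC 0)
        simpa using this
      obtain ⟨B, hB⟩ := (isCompact_closedBall (0 : ℂ) 1).exists_bound_of_continuousOn
        hd.continuous.continuousOn
      have hB0 : 0 ≤ B := (norm_nonneg _).trans (hB 0 (by simp))
      refine ⟨B + 2 * (2 * C), fun s => ?_⟩
      have hp : (1 : ℝ) ≤ (1 + ‖s‖) ^ D := one_le_pow₀ (by linarith [norm_nonneg s])
      by_cases hs : ‖s‖ ≤ 1
      · have := hB s (by simpa using hs)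
        nlinarith
      · push Not at hs
        have h1 : s * dslope f 0 s = f s - f 0 := by
          have := sub_smul_dslope f 0 s
          simpa using this
        have h2 : ‖s‖ * ‖dslope f 0 s‖ ≤ 2 * C * (1 + ‖s‖) ^ (D + 1) := by
          rw [← norm_mul, h1]
          refine (norm_sub_le _ _).trans ?_
          have h3 := hC s
          have h4 : ‖f 0‖ ≤ C := by simpa using hC 0
          have hp' : (1 : ℝ) ≤ (1 + ‖s‖) ^ (D + 1) := one_le_pow₀ (by linarith [norm_nonneg s])
          nlinarith
        have h5 : (1 + ‖s‖) ^ (D + 1) ≤ 2 * ‖s‖ * (1 + ‖s‖) ^ D := by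
          rw [pow_succ, mul_comm]
          gcongr
          linarith
        have h6 : ‖s‖ * ‖dslope f 0 s‖ ≤ ‖s‖ * (2 * (2 * C) * (1 + ‖s‖) ^ D) := by
          refine h2.trans ?_
          calc 2 * C * (1 + ‖s‖) ^ (D + 1) ≤ 2 * C * (2 * ‖s‖ * (1 + ‖s‖) ^ D) := by gcongr
            _ = _ := by ring
        have h7 := le_of_mul_le_mul_left h6 (by linarith)
        have h8 : 0 ≤ B * (1 + ‖s‖) ^ D := by positivity
        linarith
    obtain ⟨P, hP, hP'⟩ := ih hd hgr
    refine ⟨Polynomial.C (f 0) + Polynomial.X * P, ?_, fun s => ?_⟩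
    · refine (Polynomial.natDegree_add_le _ _).trans (max_le (by simp) ?_)
      refine Polynomial.natDegree_mul_le.trans ?_
      have := Polynomial.natDegree_X_le (R := ℂ)
      omega
    · have := sub_smul_dslope f 0 s
      simp only [sub_zero, smul_eq_mul, hP'] at this
      simp [this]

end Growth

section LinePoly

variable {V : Type*} [AddCommGroup V] [Module ℂ V]

theorem IsPolyFun.eval_linear (P : Polynomial ℂ) (l : V →ₗ[ℂ] ℂ) :
    IsPolyFun (fun x => P.eval (l x)) := by
  induction P using Polynomial.induction_on with
  | C a => simpa using IsPolyFun.const a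
  | add p q hp hq => simpa using hp.add hq
  | monomial n a ih =>
    have h : (fun x : V => Polynomial.eval (l x) (Polynomial.C a * Polynomial.X ^ (n + 1))) =
        fun x => Polynomial.eval (l x) (Polynomial.C a * Polynomial.X ^ n) * l x := by
      ext x
      simp
      ring
    rw [h]
    exact ih.mul (IsPolyFun.linear l)

theorem IsPolyFun.line_bdd {f : V → ℂ} (hf : IsPolyFun f) :
    ∃ D : ℕ, ∀ x v : V, ∃ P : Polynomial ℂ, P.natDegree ≤ D ∧ ∀ s : ℂ, f (x + s • v) = P.eval s := by
  unfold IsPolyFun at hf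
  induction hf using Algebra.adjoin_induction with
  | mem f hf =>
    obtain ⟨l, rfl⟩ := hf
    refine ⟨1, fun x v => ⟨Polynomial.C (l v) * Polynomial.X + Polynomial.C (l x),
      Polynomial.natDegree_linear_le, fun s => ?_⟩⟩
    simp
    ring
  | algebraMap c => exact ⟨0, fun x v => ⟨Polynomial.C c, by simp, fun s => by simp⟩⟩
  | add f h _ _ hf hh =>
    obtain ⟨D, hf⟩ := hf
    obtain ⟨E, hh⟩ := hh
    refine ⟨max D E, fun x v => ?_⟩
    obtain ⟨P, hPd, hP⟩ := hf x v
    obtain ⟨Q, hQd, hQ⟩ := hh x v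
    exact ⟨P + Q, (Polynomial.natDegree_add_le _ _).trans (max_le_max hPd hQd),
      fun s => by simp [hP, hQ]⟩
  | mul f h _ _ hf hh =>
    obtain ⟨D, hf⟩ := hf
    obtain ⟨E, hh⟩ := hh
    refine ⟨D + E, fun x v => ?_⟩
    obtain ⟨P, hPd, hP⟩ := hf x v
    obtain ⟨Q, hQd, hQ⟩ := hh x v
    exact ⟨P * Q, Polynomial.natDegree_mul_le.trans (add_le_add hPd hQd),
      fun s => by simp [hP, hQ]⟩

theorem polyFun_multi {Q : V → ℂ} {D : ℕ} (h : ∀ x v : V, ∃ P : Polynomial ℂ, P.natDegree ≤ D ∧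
    ∀ s : ℂ, Q (x + s • v) = P.eval s) (k : ℕ) (v : Fin k → V) (x : V) :
    IsPolyFun (fun s : Fin k → ℂ => Q (x + ∑ i, s i • v i)) := by
  induction k generalizing x with
  | zero => simpa using IsPolyFun.const (Q x)
  | succ k ih =>
    let T : Finset ℕ := Finset.range (D + 1)
    let c : ℕ → ℂ := fun j => (j : ℂ)
    have hc : Set.InjOn c T := fun a _ b _ hab => by simpa [c] using hab
    let L : (Fin (k + 1) → ℂ) →ₗ[ℂ] (Fin k → ℂ) := LinearMap.funLeft ℂ ℂ Fin.succ
    have key : (fun s : Fin (k + 1) → ℂ => Q (x + ∑ i, s i • v i)) = fun s =>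
        ∑ j ∈ T, Q ((x + c j • v 0) + ∑ i, L s i • v i.succ) *
          (Lagrange.basis T c j).eval ((LinearMap.proj 0 : (Fin (k + 1) → ℂ) →ₗ[ℂ] ℂ) s) := by
      ext s
      obtain ⟨P, hPd, hP⟩ := h (x + ∑ i : Fin k, s i.succ • v i.succ) (v 0)
      have h1 : P = Lagrange.interpolate T c (fun j => P.eval (c j)) := by
        refine Lagrange.eq_interpolate_of_eval_eq _ hc ?_ fun _ _ => rfl
        refine lt_of_le_of_lt Polynomial.degree_le_natDegree ?_
        simp only [T, Finset.card_range]
        exact_mod_cast Nat.lt_succ_of_le hPd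
      have h2 : x + ∑ i, s i • v i = (x + ∑ i : Fin k, s i.succ • v i.succ) + s 0 • v 0 := by
        rw [Fin.sum_univ_succ]; abel
      rw [h2, hP, h1, Lagrange.interpolate_apply, Polynomial.eval_finsetSum]
      refine Finset.sum_congr rfl fun j _ => ?_
      rw [Polynomial.eval_mul, Polynomial.eval_C, ← hP]
      congr 2
      simp only [L, LinearMap.funLeft_apply]
      abel
    rw [key]
    refine IsPolyFun.sum _ fun j => ?_
    exact ((ih (fun i => v i.succ) (x + c j • v 0)).comp L).mul (IsPolyFun.eval_linear _ _)

theorem polyFun_of_lines [FiniteDimensional ℂ V] {Q : V → ℂ} {D : ℕ}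
    (h : ∀ x v : V, ∃ P : Polynomial ℂ, P.natDegree ≤ D ∧ ∀ s : ℂ, Q (x + s • v) = P.eval s) :
    IsPolyFun Q := by
  let b := Module.finBasis ℂ V
  have h1 := (polyFun_multi h _ b 0).comp b.equivFun.toLinearMap
  have h2 : (fun x => Q (0 + ∑ i, (b.equivFun.toLinearMap x) i • b i)) = Q := by
    ext x
    rw [zero_add]
    congr 1
    exact b.sum_equivFun x
  rwa [h2] at h1

end LinePoly

set_option linter.unusedSectionVars false

section Extension

variable {g : Type*} [LieRing g] [LieAlgebra ℂ g] [FiniteDimensional ℂ g]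

open LieAlgebra LieModule Module Filter Topology

/-- The sum of the absolute values of the matrix coefficients. -/
def matSize (A : Module.End ℂ g) : ℝ :=
  ∑ i, ∑ j, ‖(Module.finBasis ℂ g).coord i (A (Module.finBasis ℂ g j))‖

theorem eigen_bound {A : Module.End ℂ g} {e : g} (he : e ≠ 0) {c : ℂ} (h : A e = c • e) :
    ‖c‖ ≤ matSize A := by
  let b := Module.finBasis ℂ g
  have hne : Nonempty (Fin (finrank ℂ g)) := by
    by_contra hc
    rw [not_nonempty_iff] at hc
    apply he
    rw [← b.sum_repr e]
    simp
  obtain ⟨i, hi⟩ := Finite.exists_max fun i => ‖b.coord i e‖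
  have hi0 : 0 < ‖b.coord i e‖ := by
    rcases (norm_nonneg (b.coord i e)).lt_or_eq with h1 | h1
    · exact h1
    · exfalso
      apply he
      apply b.ext_elem
      intro j
      have := hi j
      rw [← h1] at this
      simpa using this
  have h1 : c * b.coord i e = ∑ j, b.coord j e * b.coord i (A (b j)) := by
    have h2 : b.coord i (A e) = c * b.coord i e := by rw [h, map_smul, smul_eq_mul]
    rw [← h2]
    conv_lhs => rw [← b.sum_repr e]
    rw [map_sum, map_sum]
    refine Finset.sum_congr rfl fun j _ => ?_
    rw [map_smul, map_smul]
    rfl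
  have h2 : ‖c‖ * ‖b.coord i e‖ ≤ matSize A * ‖b.coord i e‖ := by
    rw [← norm_mul, h1]
    refine (norm_sum_le _ _).trans ?_
    calc ∑ j, ‖b.coord j e * b.coord i (A (b j))‖
        ≤ ∑ j, ‖b.coord i (A (b j))‖ * ‖b.coord i e‖ := by
          refine Finset.sum_le_sum fun j _ => ?_
          rw [norm_mul, mul_comm]
          gcongr
          exact hi j
      _ = (∑ j, ‖b.coord i (A (b j))‖) * ‖b.coord i e‖ := by rw [Finset.sum_mul]
      _ ≤ matSize A * ‖b.coord i e‖ := by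
          gcongr
          exact Finset.single_le_sum (f := fun i => ∑ j, ‖b.coord i (A (b j))‖)
            (fun _ _ => Finset.sum_nonneg fun _ _ => norm_nonneg _) (Finset.mem_univ i)
  exact le_of_mul_le_mul_right h2 hi0

theorem matSize_line (x v : g) (s : ℂ) :
    matSize (ad ℂ g (x + s • v)) ≤ (matSize (ad ℂ g x) + matSize (ad ℂ g v)) * (1 + ‖s‖) := by
  have h0 : ∀ A : Module.End ℂ g, 0 ≤ matSize A := fun A =>
    Finset.sum_nonneg fun _ _ => Finset.sum_nonneg fun _ _ => norm_nonneg _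
  have h1 : matSize (ad ℂ g (x + s • v)) ≤ matSize (ad ℂ g x) + ‖s‖ * matSize (ad ℂ g v) := by
    unfold matSize
    rw [Finset.mul_sum, ← Finset.sum_add_distrib]
    refine Finset.sum_le_sum fun i _ => ?_
    rw [Finset.mul_sum, ← Finset.sum_add_distrib]
    refine Finset.sum_le_sum fun j _ => ?_
    have : (ad ℂ g (x + s • v)) (finBasis ℂ g j) = ad ℂ g x (finBasis ℂ g j) +
        s • ad ℂ g v (finBasis ℂ g j) := by simp
    rw [this, map_add, map_smul, ← norm_smul]
    exact norm_add_le _ _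
  have := h0 (ad ℂ g x)
  have := h0 (ad ℂ g v)
  have := norm_nonneg s
  nlinarith

variable [LieAlgebra.IsKilling ℂ g] {H : LieSubalgebra ℂ g} [H.IsCartanSubalgebra]

variable (H) in
/-- A representative in `H` of the orbit of a regular element. -/
def cartanRep (x : g) : H :=
  open Classical in
  if hx : IsRegular ℂ x then
    ⟨(exists_conj_cartan H hx).choose x, (exists_conj_cartan H hx).choose_spec.2⟩ else 0

theorem cartanRep_spec {x : g} (hx : IsRegular ℂ x) :
    ∃ u ∈ adjointGroup g, u x = (cartanRep H x : g) := by
  refine ⟨(exists_conj_cartan H hx).choose, (exists_conj_cartan H hx).choose_spec.1, ?_⟩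
  rw [cartanRep, dif_pos hx]

theorem cartanRep_growth (α : Weight ℂ H g) (x v : g) :
    PolyGrowth 1 (fun s => α (cartanRep H (x + s • v))) := by
  refine ⟨matSize (ad ℂ g x) + matSize (ad ℂ g v), fun s => ?_⟩
  rw [pow_one]
  by_cases hr : IsRegular ℂ (x + s • v)
  · refine le_trans ?_ (matSize_line x v s)
    obtain ⟨u, hu, hux⟩ := cartanRep_spec (H := H) hr
    obtain ⟨e, he, he0⟩ := α.exists_ne_zero
    refine eigen_bound (e := u⁻¹ e) ?_ ?_
    · intro h
      apply he0
      rw [← linEquiv_apply_inv u e, h, map_zero]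
    · have ha := adjointGroup_isLieAut hu
      have h1 := lie_root he (cartanRep H (x + s • v))
      rw [← hux] at h1
      apply u.injective
      rw [ad_apply, ha, map_smul, linEquiv_apply_inv, h1]
  · have h1 : cartanRep H (x + s • v) = 0 := dif_neg hr
    have h0 : α (0 : H) = 0 := (Weight.toLinear ℂ H g α).map_zero
    simp only [h1, h0, norm_zero]
    refine le_trans ?_ (matSize_line x v s)
    exact Finset.sum_nonneg fun _ _ => Finset.sum_nonneg fun _ _ => norm_nonneg _

theorem cartanRep_growth_linear (l : H →ₗ[ℂ] ℂ) (x v : g) :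
    PolyGrowth 1 (fun s => l (cartanRep H (x + s • v))) := by
  have hl : l ∈ Submodule.span ℂ (Set.range (Weight.toLinear ℂ H g)) := by
    rw [IsKilling.span_weight_eq_top]; trivial
  induction hl using Submodule.span_induction with
  | mem l hl =>
    obtain ⟨α, rfl⟩ := hl
    exact cartanRep_growth α x v
  | zero => simpa using (PolyGrowth.const 0).mono (Nat.zero_le _)
  | add l m _ _ hl hm => exact hl.add hm
  | smul c l _ hl => simpa using (PolyGrowth.const c).mul hl

variable {ι : Type*} (T : Finset ι) (l : ι → H →ₗ[ℂ] ℂ) (c : ℂ)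

/-- The product function on `H`. -/
def prodFun (h : H) : ℂ := ∏ i ∈ T, (l i h - c)

theorem prodFun_growth (x v : g) :
    PolyGrowth T.card (fun s => prodFun T l c (cartanRep H (x + s • v))) := by
  unfold prodFun
  refine PolyGrowth.prod T fun i => ?_
  simp only [sub_eq_add_neg]
  exact (cartanRep_growth_linear (l i) x v).add ((PolyGrowth.const (-c)).mono (Nat.zero_le _))

theorem prodFun_cartanRep
    (hinv : ∀ u ∈ adjointGroup g, ∀ h h' : H, IsRegular ℂ (h : g) → u h = h' →
      prodFun T l c h' = prodFun T l c h)
    {u : g ≃ₗ[ℂ] g} (hu : u ∈ adjointGroup g) {h : H} (hr : IsRegular ℂ (h : g)) :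
    prodFun T l c (cartanRep H (u h)) = prodFun T l c h := by
  have hr' := (isRegular_aut (adjointGroup_isLieAut hu) (h : g)).mpr hr
  obtain ⟨w, hw, hwx⟩ := cartanRep_spec (H := H) hr'
  exact hinv (w * u) (mul_mem hw hu) h _ hr hwx

theorem deriv_zero_aux {f k : ℂ → ℂ} {P : Polynomial ℂ} (hP : P.eval 0 = 0)
    (hf : ∀ s, f s = P.eval s * k s) (hk : Tendsto k (𝓝 0) (𝓝 0)) : DifferentiableAt ℂ f 0 := by
  obtain ⟨R, rfl⟩ := Polynomial.X_dvd_iff.mpr (by rwa [Polynomial.coeff_zero_eq_eval_zero] :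
    P.coeff 0 = 0)
  have : HasDerivAt f 0 0 := by
    rw [hasDerivAt_iff_tendsto_slope_zero]
    have h1 : Tendsto (fun s => R.eval s * k s) (𝓝[≠] 0) (𝓝 0) := by
      have := (R.continuous.tendsto 0).mul hk
      rw [mul_zero] at this
      exact this.mono_left nhdsWithin_le_nhds
    refine h1.congr' ?_
    filter_upwards [self_mem_nhdsWithin] with s hs
    have hs' : s ≠ 0 := hs
    simp only [hf]
    simp
    field_simp
  exact this.differentiableAt

theorem growth_tendsto {P : Polynomial ℂ} (hP : P.eval 0 = 0) {D : ℕ} {f : ℂ → ℂ}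
    (hf : PolyGrowth D f) : Tendsto (fun s => P.eval s * f s) (𝓝 0) (𝓝 0) := by
  obtain ⟨C, hC⟩ := hf
  rw [tendsto_zero_iff_norm_tendsto_zero]
  have h1 : Tendsto (fun s : ℂ => ‖P.eval s‖ * (C * (1 + ‖s‖) ^ D)) (𝓝 0) (𝓝 0) := by
    have : Continuous (fun s : ℂ => ‖P.eval s‖ * (C * (1 + ‖s‖) ^ D)) := by fun_prop
    simpa [hP] using this.tendsto 0
  refine squeeze_zero (fun s => norm_nonneg _) (fun s => ?_) h1
  rw [norm_mul]
  gcongr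
  exact hC s

theorem ext_differentiable
    (hinv : ∀ u ∈ adjointGroup g, ∀ h h' : H, IsRegular ℂ (h : g) → u h = h' →
      prodFun T l c h' = prodFun T l c h) (x v : g) :
    DifferentiableAt ℂ (fun s : ℂ => disc (x + s • v) ^ 2 *
      prodFun T l c (cartanRep H (x + s • v))) 0 := by
  obtain ⟨P, hP⟩ := (isPolyFun_disc (g := g)).line x v
  by_cases hx : IsRegular ℂ x
  · have hreg : ∀ᶠ s in 𝓝 (0 : ℂ), IsRegular ℂ (x + s • v) := by
      have hfin := finite_nonregular_line (x := x) (v := v) ⟨0, by simpa using hx⟩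
      have := hfin.isClosed.isOpen_compl.mem_nhds (x := 0) (by simpa using hx)
      filter_upwards [this] with s hs
      exact not_not.mp hs
    obtain ⟨u, hu, hux⟩ := cartanRep_spec (H := H) hx
    have hr0 : IsRegular ℂ (cartanRep H x : g) := by
      rw [← hux, isRegular_aut (adjointGroup_isLieAut hu)]; exact hx
    obtain ⟨w, b, hb0, hw, hb, hbd⟩ := lie_chart (cartanRep H x) ((regular_iff_weight _).mp hr0) (u v)
    have h1 : (fun s : ℂ => disc (x + s • v) ^ 2 * prodFun T l c (cartanRep H (x + s • v)))
        =ᶠ[𝓝 0] fun s => P.eval s ^ 2 * ∏ i ∈ T, (l i (b s) - c) := by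
      filter_upwards [hreg, hb] with s hs hbs
      rw [hP]
      congr 1
      have h2 : x + s • v = (u⁻¹ * w s) (b s) := by
        rw [linEquiv_mul_apply, hbs, ← hux, ← map_smul, ← map_add, linEquiv_inv_apply]
      have hm := mul_mem (inv_mem hu) (hw s)
      rw [h2] at hs ⊢
      rw [prodFun_cartanRep T l c hinv hm]
      · rfl
      · rwa [isRegular_aut (adjointGroup_isLieAut hm)] at hs
    refine DifferentiableAt.congr_of_eventuallyEq ?_ h1
    refine DifferentiableAt.mul (by fun_prop) ?_
    refine DifferentiableAt.fun_finsetProd fun i _ => (hbd (l i)).sub_const c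
  · have hP0 : P.eval 0 = 0 := by
      rw [← hP, zero_smul, add_zero]
      by_contra hc
      exact hx hc
    refine deriv_zero_aux (P := P) hP0 (fun s => ?_) (growth_tendsto hP0 (prodFun_growth T l c x v))
    rw [hP]
    ring

theorem exists_invariant_ext
    (hinv : ∀ u ∈ adjointGroup g, ∀ h h' : H, IsRegular ℂ (h : g) → u h = h' →
      prodFun T l c h' = prodFun T l c h) :
    ∃ Q : g → ℂ, IsPolyFun Q ∧ (∀ u ∈ adjointGroup g, ∀ x, Q (u x) = Q x) ∧
      ∀ h : H, IsRegular ℂ (h : g) → Q h = disc (h : g) ^ 2 * prodFun T l c h := by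
  refine ⟨fun x => disc x ^ 2 * prodFun T l c (cartanRep H x), ?_, ?_, ?_⟩
  · obtain ⟨D, hD⟩ := (isPolyFun_disc (g := g)).line_bdd
    refine polyFun_of_lines (D := (D + D) + T.card) fun x v => ?_
    refine liouville_growth _ (fun s0 => ?_) ?_
    · have h1 := ext_differentiable T l c hinv (x + s0 • v) v
      have h2 : DifferentiableAt ℂ (fun s : ℂ => s - s0) s0 := by fun_prop
      have h3 := DifferentiableAt.comp s0 (f := fun s : ℂ => s - s0)
        (g := fun s : ℂ => disc (x + s0 • v + s • v) ^ 2 *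
          prodFun T l c (cartanRep H (x + s0 • v + s • v))) (by rw [sub_self]; exact h1) h2
      refine h3.congr_of_eventuallyEq (Eventually.of_forall fun s => ?_)
      have h5 : x + s0 • v + (s - s0) • v = x + s • v := by
        rw [sub_smul]; abel
      simp only [Function.comp_apply, h5]
    · obtain ⟨P, hPd, hP⟩ := hD x v
      have h1 := (polynomial_growth P).mono hPd
      have h2 := (h1.mul h1).mul (prodFun_growth T l c x v)
      simp only [hP, sq]
      exact h2
  · intro u hu x
    have ha := adjointGroup_isLieAut hu
    simp only [disc_aut ha]
    by_cases hx : IsRegular ℂ x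
    · obtain ⟨w, hw, hwx⟩ := cartanRep_spec (H := H) hx
      have hr0 : IsRegular ℂ (cartanRep H x : g) := by
        rw [← hwx, isRegular_aut (adjointGroup_isLieAut hw)]; exact hx
      have h1 := prodFun_cartanRep T l c hinv (mul_mem hu (inv_mem hw)) hr0
      rw [linEquiv_mul_apply, ← hwx, linEquiv_inv_apply] at h1
      rw [h1]
    · have : disc x = 0 := by
        by_contra hc
        exact hx hc
      rw [this]
      simp
  · intro h hr
    have := prodFun_cartanRep T l c hinv (one_mem _) hr
    rw [← this]
    rfl

end Extension

set_option linter.unusedSectionVars false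

section Separation

variable {g : Type*} [LieRing g] [LieAlgebra ℂ g] [FiniteDimensional ℂ g]
  [LieAlgebra.IsKilling ℂ g] {H : LieSubalgebra ℂ g} [H.IsCartanSubalgebra]

open LieAlgebra LieModule Module

/-- The restriction of a linear automorphism preserving `H`. -/
def resH (u : g ≃ₗ[ℂ] g) (h : ∀ z ∈ H, u z ∈ H) : H →ₗ[ℂ] H where
  toFun z := ⟨u z, h z z.2⟩
  map_add' x y := by ext; simp
  map_smul' c x := by ext; simp

variable (H) in
/-- The Weyl group, as a set of linear maps. -/
def weylSet : Set (H →ₗ[ℂ] H) :=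
  {w | ∃ u ∈ adjointGroup g, ∀ h : H, u h = (w h : g)}

theorem weight_comp_aut {u : g ≃ₗ[ℂ] g} (hu : IsLieAut u) {w : H →ₗ[ℂ] H}
    (hw : ∀ h : H, u h = (w h : g)) (α : Weight ℂ H g) :
    ∃ β : Weight ℂ H g, ∀ h, β h = α (w h) := by
  obtain ⟨e, he, he0⟩ := α.exists_ne_zero
  have h1 : u⁻¹ e ∈ weightSpace g (fun h : H => α (w h)) := by
    rw [mem_weightSpace]
    intro h
    apply u.injective
    change u ⁅(h : g), u⁻¹ e⁆ = _
    rw [hu, map_smul, linEquiv_apply_inv, hw, lie_root he]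
  have h2 : genWeightSpace g (fun h : H => α (w h)) ≠ ⊥ := by
    intro hb
    have h3 := weightSpace_le_genWeightSpace g (fun h : H => α (w h)) h1
    rw [hb, LieSubmodule.mem_bot] at h3
    apply he0
    rw [← linEquiv_apply_inv u e, h3, map_zero]
  exact ⟨⟨_, h2⟩, fun h => rfl⟩

theorem weylSet_finite : (weylSet H).Finite := by
  have hr : (Set.range (Weight.toLinear ℂ H g)).Finite := Set.finite_range _
  have hpi : {f : Weight ℂ H g → (H →ₗ[ℂ] ℂ) | ∀ α, f α ∈ Set.range (Weight.toLinear ℂ H g)}.Finite :=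
    Set.Finite.pi' fun _ => hr
  refine Set.Finite.of_injOn (f := fun w : H →ₗ[ℂ] H => fun α : Weight ℂ H g =>
    (Weight.toLinear ℂ H g α) ∘ₗ w) ?_ ?_ hpi
  · rintro w ⟨u, hu, hw⟩ α
    obtain ⟨β, hβ⟩ := weight_comp_aut (adjointGroup_isLieAut hu) hw α
    exact ⟨β, LinearMap.ext fun h => hβ h⟩
  · intro w _ w' _ hww
    ext h
    have h1 : ∀ l : H →ₗ[ℂ] ℂ, l (w h) = l (w' h) := by
      intro l
      have hl : l ∈ Submodule.span ℂ (Set.range (Weight.toLinear ℂ H g)) := by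
        rw [IsKilling.span_weight_eq_top]; trivial
      induction hl using Submodule.span_induction with
      | mem l hl =>
        obtain ⟨α, rfl⟩ := hl
        exact congrArg (fun f => f h) (congrFun hww α)
      | zero => simp
      | add l m _ _ hl hm => simp [hl, hm]
      | smul c l _ hl => simp [hl]
    have h2 : w h = w' h := by
      rw [← sub_eq_zero, ← Module.forall_dual_apply_eq_zero_iff ℂ]
      intro l
      rw [map_sub, sub_eq_zero]
      exact h1 l
    rw [h2]

theorem separation {σ : g ≃ₗ[ℂ] g} (hσ : IsLieAut σ) (hσp : σ ∈ primeGroup (adjointGroup g))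
    (hσH : ∀ z, σ z ∈ H ↔ z ∈ H) : ∃ u ∈ adjointGroup g, ∀ h ∈ H, u h = σ h := by
  classical
  let s : H →ₗ[ℂ] H := resH σ fun z hz => (hσH z).mpr hz
  by_cases hs : s ∈ weylSet H
  · obtain ⟨u, hu, h⟩ := hs
    exact ⟨u, hu, fun z hz => h ⟨z, hz⟩⟩
  exfalso
  have hfin := weylSet_finite (H := H)
  have : Finite (weylSet H) := hfin
  obtain ⟨h, -, hnz, hgen⟩ := exists_generic (H := H)
    (fun w : weylSet H => LinearMap.ker (s - (w : H →ₗ[ℂ] H))) (by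
      rintro ⟨w, hw⟩ hc
      rw [LinearMap.ker_eq_top, sub_eq_zero] at hc
      exact hs (hc ▸ hw))
  have hr : IsRegular ℂ (h : g) := (regular_iff_weight h).mpr hnz
  have hws : ∀ w : weylSet H, (w : H →ₗ[ℂ] H) (s h) - h ≠ 0 := by
    rintro ⟨w, u, hu, hw⟩ hc
    rw [sub_eq_zero] at hc
    have ha := adjointGroup_isLieAut (inv_mem hu)
    have h1 : u⁻¹ (h : g) = s h := by
      have h2 := hw (s h)
      simp only at hc
      rw [hc] at h2
      rw [← h2, linEquiv_inv_apply]
    have h3 := preserves_of_regular ha hr (by rw [h1]; exact (s h).2)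
    refine hgen ⟨resH u⁻¹ fun z hz => (h3 z).mpr hz, u⁻¹, inv_mem hu, fun _ => rfl⟩ ?_
    rw [LinearMap.mem_ker, LinearMap.sub_apply, sub_eq_zero]
    ext
    exact h1.symm
  obtain ⟨ℓ, hℓ⟩ := Module.exists_dual_forall_apply_ne_zero (K := ℂ)
    (fun w : weylSet H => (w : H →ₗ[ℂ] H) (s h) - h) hws
  obtain ⟨Q, hQ, hQinv, hQH⟩ := exists_invariant_ext (H := H) hfin.toFinset
    (fun w : H →ₗ[ℂ] H => ℓ ∘ₗ w) (ℓ h) (by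
      intro u hu k k' hk huk
      have ha := adjointGroup_isLieAut hu
      have h3 := preserves_of_regular ha hk (by rw [huk]; exact k'.2)
      let w0 : H →ₗ[ℂ] H := resH u fun z hz => (h3 z).mpr hz
      have hk' : w0 k = k' := Subtype.ext huk
      have hsurj : Function.Surjective w0 := by
        intro z
        refine ⟨⟨u⁻¹ z, (h3 _).mp (by rw [linEquiv_apply_inv]; exact z.2)⟩, ?_⟩
        ext
        exact linEquiv_apply_inv u z
      have hmaps : Set.MapsTo (fun w : H →ₗ[ℂ] H => w ∘ₗ w0) hfin.toFinset hfin.toFinset := by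
        intro w hw
        rw [Finset.mem_coe, Set.Finite.mem_toFinset] at hw ⊢
        obtain ⟨v, hv, hvw⟩ := hw
        exact ⟨v * u, mul_mem hv hu, fun z => hvw (w0 z)⟩
      have hinj : Set.InjOn (fun w : H →ₗ[ℂ] H => w ∘ₗ w0) (hfin.toFinset : Set (H →ₗ[ℂ] H)) := by
        intro w _ w' _ hww
        ext z
        obtain ⟨y, rfl⟩ := hsurj z
        exact congrArg Subtype.val (LinearMap.congr_fun hww y)
      have hsurjOn := Finset.surjOn_of_injOn_of_card_le _ hmaps hinj le_rfl
      unfold prodFun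
      refine Finset.prod_nbij (fun w : H →ₗ[ℂ] H => w ∘ₗ w0) hmaps hinj hsurjOn ?_
      intro w _
      rw [← hk']
      rfl)
  have hrs : IsRegular ℂ (σ h) := (isRegular_aut hσ _).mpr hr
  have h1 : Q (σ h) = Q h := hσp Q hQ hQinv h
  have h2 := hQH h hr
  have h3 : Q (σ h) = _ := hQH (s h) hrs
  have h4 : prodFun hfin.toFinset (fun w : H →ₗ[ℂ] H => ℓ ∘ₗ w) (ℓ h) h = 0 := by
    refine Finset.prod_eq_zero (i := LinearMap.id) ?_ (by simp)
    rw [Set.Finite.mem_toFinset]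
    exact ⟨1, one_mem _, fun _ => rfl⟩
  have h5 : prodFun hfin.toFinset (fun w : H →ₗ[ℂ] H => ℓ ∘ₗ w) (ℓ h) (s h) ≠ 0 := by
    refine Finset.prod_ne_zero_iff.mpr fun w hw => ?_
    rw [Set.Finite.mem_toFinset] at hw
    have := hℓ ⟨w, hw⟩
    rwa [map_sub] at this
  rw [h4, mul_zero] at h2
  rw [h1, h2] at h3
  have h6 : disc (s h : g) ≠ 0 := hrs
  exact (mul_ne_zero (pow_ne_zero 2 h6) h5) h3.symm

end Separation

set_option linter.unusedSectionVars false

section Torus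

variable {g : Type*} [LieRing g] [LieAlgebra ℂ g] [FiniteDimensional ℂ g]
  [LieAlgebra.IsKilling ℂ g] {H : LieSubalgebra ℂ g} [H.IsCartanSubalgebra]

open LieAlgebra LieModule Module LieAlgebra.IsKilling

theorem root_isNonZero (i : H.root) : (i : Weight ℂ H g).IsNonZero := by
  exact (Finset.mem_filter.mp i.2).2

theorem exists_lie_root_ne_zero {α β γ : Weight ℂ H g} (hα : α.IsNonZero)
    (hγ : (γ : H → ℂ) = α + β) :
    ∃ e ∈ rootSpace H α, ∃ y ∈ rootSpace H β, ⁅e, y⁆ ≠ 0 := by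
  obtain ⟨x, hx, x_ne0⟩ := (chainTop α β).exists_ne_zero
  obtain ⟨h, e, f, isSl2, he, hf⟩ := exists_isSl2Triple_of_weight_isNonZero hα
  obtain rfl := isSl2.h_eq_coroot hα he hf
  have prim : isSl2.HasPrimitiveVectorWith x (chainLength α β : ℂ) :=
    have := lie_mem_genWeightSpace_of_mem_genWeightSpace he hx
    ⟨x_ne0, (chainLength_smul _ _ hx).symm, by rwa [genWeightSpace_add_chainTop _ _ hα] at this⟩
  have hle := chainTopCoeff_le_chainLength α β
  obtain ⟨q, hq⟩ : ∃ q, chainTopCoeff α β = q + 1 := by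
    refine Nat.exists_eq_succ_of_ne_zero fun h0 => ?_
    have h1 := genWeightSpace_chainTopCoeff_add_one_nsmul_add α β hα
    rw [h0, zero_add, one_smul, ← hγ] at h1
    exact γ.2 h1
  refine ⟨e, he, ((toEnd ℂ g g f) ^ (q + 1)) x, ?_, ?_⟩
  · have h1 := toEnd_pow_apply_mem hf hx (q + 1)
    have h2 : ((q + 1) • (-α : H → ℂ) + (chainTop α β : H → ℂ)) = β := by
      rw [coe_chainTop', hq]
      simp
    rw [h2] at h1
    exact h1
  · rw [prim.lie_e_pow_succ_toEnd_f q]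
    refine smul_ne_zero (mul_ne_zero ?_ ?_) (prim.pow_toEnd_f_ne_zero_of_eq_nat rfl (by omega))
    · exact_mod_cast Nat.succ_ne_zero q
    · rw [sub_ne_zero]
      norm_cast
      omega

theorem map_root_of_fix {σ : g ≃ₗ[ℂ] g} (hσ : IsLieAut σ) (hfix : ∀ h ∈ H, σ h = h)
    {α : Weight ℂ H g} {x : g} (hx : x ∈ rootSpace H α) : σ x ∈ rootSpace H α := by
  refine weightSpace_le_genWeightSpace g (α : H → ℂ) ?_
  rw [mem_weightSpace]
  intro h
  change ⁅(h : g), σ x⁆ = _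
  conv_lhs => rw [← hfix h h.2]
  rw [← hσ, lie_root hx, map_smul]

theorem map_root_of_neg {σ : g ≃ₗ[ℂ] g} (hσ : IsLieAut σ) (hfix : ∀ h ∈ H, σ h = -h)
    {α : Weight ℂ H g} {x : g} (hx : x ∈ rootSpace H α) :
    σ x ∈ rootSpace H (-α : Weight ℂ H g) := by
  refine weightSpace_le_genWeightSpace g ((-α : Weight ℂ H g) : H → ℂ) ?_
  rw [mem_weightSpace]
  intro h
  change ⁅(h : g), σ x⁆ = _
  have h1 : (h : g) = - σ h := by rw [hfix h h.2, neg_neg]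
  rw [h1, neg_lie, ← hσ, lie_root hx, map_smul, Weight.coe_neg, Pi.neg_apply, neg_smul]

theorem isZero_fix {σ : g ≃ₗ[ℂ] g} (hfix : ∀ h ∈ H, σ h = h) {α : Weight ℂ H g} (hα : α.IsZero)
    {x : g} (hx : x ∈ rootSpace H α) : σ x = x := by
  have h0 : (α : H → ℂ) = 0 := hα
  rw [h0, mem_zero_root] at hx
  exact hfix x hx

/-- An automorphism fixing `H` pointwise is given by an exponential character on the roots. -/
theorem exists_log {σ : g ≃ₗ[ℂ] g} (hσ : IsLieAut σ) (hfix : ∀ h ∈ H, σ h = h) :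
    ∃ z : H, ∀ (α : Weight ℂ H g) (x : g), x ∈ rootSpace H α → σ x = Complex.exp (α z) • x := by
  have hsc : ∀ i : H.root, ∃ c : ℂ, c ≠ 0 ∧
      ∀ x ∈ rootSpace H (i : Weight ℂ H g), σ x = c • x := by
    intro i
    have hi : (i : Weight ℂ H g).IsNonZero := root_isNonZero i
    obtain ⟨e, he, he0⟩ := (i : Weight ℂ H g).exists_ne_zero
    obtain ⟨c, hc⟩ := root_mem_span hi he he0 (map_root_of_fix hσ hfix he)
    refine ⟨c, ?_, fun x hx => ?_⟩
    · rintro rfl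
      rw [zero_smul] at hc
      exact he0 (σ.injective (by rw [hc, map_zero]))
    · obtain ⟨d, rfl⟩ := root_mem_span hi he he0 hx
      rw [map_smul, hc, smul_comm]
  choose c hc0 hc using hsc
  obtain ⟨b⟩ := RootPairing.nonempty_base (rootSystem H)
  obtain ⟨z, hz⟩ : ∃ z : H, ∀ l : Dual ℂ H,
      l z = b.toWeightBasis.constr ℂ (fun i => Complex.log (c i)) l := by
    refine ⟨(Module.evalEquiv ℂ H).symm (b.toWeightBasis.constr ℂ (fun i => Complex.log (c i))),
      fun l => ?_⟩
    simp
  refine ⟨z, ?_⟩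
  have key : ∀ i : H.root, ∀ x ∈ rootSpace H (i : Weight ℂ H g),
      σ x = Complex.exp ((i : Weight ℂ H g) z) • x := by
    intro i
    refine RootPairing.Base.induction_add (b := b) i (p := fun i : H.root =>
      ∀ x ∈ rootSpace H (i : Weight ℂ H g), σ x = Complex.exp ((i : Weight ℂ H g) z) • x) ?_ ?_ ?_
    · intro i hp
      have hi : (i : Weight ℂ H g).IsNonZero := root_isNonZero i
      have hr : ((((rootSystem H).reflectionPerm i i : H.root) : Weight ℂ H g) : H → ℂ) =
          -(i : Weight ℂ H g) := by
        have h1 : (rootSystem H).root ((rootSystem H).reflectionPerm i i) =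
            - (rootSystem H).root i := by
          rw [RootPairing.root_reflectionPerm, RootPairing.reflection_apply_self]
        funext h
        exact congrArg (fun l : Dual ℂ H => l h) h1
      obtain ⟨h, e, f, isSl2, he, hf⟩ := exists_isSl2Triple_of_weight_isNonZero hi
      have hh : h ∈ H := by
        rw [isSl2.h_eq_coroot hi he hf]; exact Subtype.property _
      set j := (rootSystem H).reflectionPerm i i with hj
      have hf' : f ∈ rootSpace H (j : Weight ℂ H g) := by rw [hr]; exact hf
      have h3 := hσ e f
      rw [isSl2.lie_e_f, hfix h hh, hp e he, hc j f hf', smul_lie, lie_smul, isSl2.lie_e_f,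
        smul_smul] at h3
      have h4 : Complex.exp ((i : Weight ℂ H g) z) * c j = 1 := by
        have h5 : (Complex.exp ((i : Weight ℂ H g) z) * c j - 1) • h = 0 := by
          rw [sub_smul, ← h3, one_smul, sub_self]
        have := (smul_eq_zero.mp h5).resolve_right isSl2.h_ne_zero
        linear_combination this
      intro x hx
      rw [hc j x hx, hr, Pi.neg_apply, Complex.exp_neg]
      congr 1
      exact eq_inv_of_mul_eq_one_right h4
    · intro i hi x hx
      have h1 : (i : Weight ℂ H g) z = Complex.log (c i) := by
        have h2 := hz ((rootSystem H).root i)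
        have h3 := b.toWeightBasis.constr_basis ℂ (fun i => Complex.log (c i)) ⟨i, hi⟩
        rw [b.toWeightBasis_apply] at h3
        exact h2.trans h3
      rw [hc i x hx, h1, Complex.exp_log (hc0 i)]
    · intro i j k hk hp hj
      have hjp : ∀ x ∈ rootSpace H (j : Weight ℂ H g),
          σ x = Complex.exp ((j : Weight ℂ H g) z) • x := by
        intro x hx
        have h1 : (j : Weight ℂ H g) z = Complex.log (c j) := by
          have h2 := hz ((rootSystem H).root j)
          have h3 := b.toWeightBasis.constr_basis ℂ (fun i => Complex.log (c i)) ⟨j, hj⟩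
          rw [b.toWeightBasis_apply] at h3
          exact h2.trans h3
        rw [hc j x hx, h1, Complex.exp_log (hc0 j)]
      have hjn : (j : Weight ℂ H g).IsNonZero := root_isNonZero j
      have hkn : (k : Weight ℂ H g).IsNonZero := root_isNonZero k
      have hk' : ((k : Weight ℂ H g) : H → ℂ) = (j : Weight ℂ H g) + (i : Weight ℂ H g) := by
        funext h
        have := congrArg (fun l : Dual ℂ H => l h) hk
        rw [Pi.add_apply, add_comm]
        exact this
      obtain ⟨e, he, y, hy, hne⟩ := exists_lie_root_ne_zero hjn hk'
      have hm : ⁅e, y⁆ ∈ rootSpace H (k : Weight ℂ H g) := by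
        rw [hk']; exact lie_mem_genWeightSpace_of_mem_genWeightSpace he hy
      have h1 : σ ⁅e, y⁆ = Complex.exp ((k : Weight ℂ H g) z) • ⁅e, y⁆ := by
        rw [hσ, hjp e he, hp y hy, smul_lie, lie_smul, smul_smul, hk', Pi.add_apply,
          Complex.exp_add]
      intro x hx
      obtain ⟨d, rfl⟩ := root_mem_span hkn hm hne hx
      rw [map_smul, h1, smul_comm]
  intro α x hx
  by_cases hα : α.IsZero
  · rw [isZero_fix hfix hα hx, weight_isZero_apply hα, Complex.exp_zero, one_smul]
  · exact key ⟨α, by simpa using hα⟩ x hx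

variable (H) in
/-- Torus elements. -/
theorem exists_torus (z : H) : ∃ τ : g ≃ₗ[ℂ] g, IsLieAut τ ∧
    ∀ (α : Weight ℂ H g) (x : g), x ∈ rootSpace H α → τ x = Complex.exp (α z) • x := by
  obtain ⟨h, hh, -, -⟩ := exists_generic H (fun i : Empty => i.elim) (fun i => i.elim)
  obtain ⟨P, hP⟩ := exists_interp hh (fun α => Complex.exp (α z))
  obtain ⟨Q, hQ⟩ := exists_interp hh (fun α => Complex.exp (-α z))
  let τ : g ≃ₗ[ℂ] g := LinearEquiv.ofLinearMap (Polynomial.aeval (ad ℂ g (h : g)) P)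
    (Polynomial.aeval (ad ℂ g (h : g)) Q)
    (end_ext_weight H fun α x hx => by
      rw [LinearMap.comp_apply, hQ α x hx, map_smul, hP α x hx, smul_smul, ← Complex.exp_add,
        neg_add_cancel, Complex.exp_zero, one_smul, LinearMap.id_apply])
    (end_ext_weight H fun α x hx => by
      rw [LinearMap.comp_apply, hP α x hx, map_smul, hQ α x hx, smul_smul, ← Complex.exp_add,
        add_neg_cancel, Complex.exp_zero, one_smul, LinearMap.id_apply])
  have hτ : ∀ (α : Weight ℂ H g) (x : g), x ∈ rootSpace H α → τ x = Complex.exp (α z) • x := hP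
  refine ⟨τ, fun x y => ?_, hτ⟩
  refine weight_induction H (p := fun x => τ ⁅x, y⁆ = ⁅τ x, τ y⁆) (by simp) ?_ ?_ x
  · intro a b ha hb
    rw [add_lie, map_add, ha, hb, map_add, add_lie]
  intro α x hx
  refine weight_induction H (p := fun y => τ ⁅x, y⁆ = ⁅τ x, τ y⁆) (by simp) ?_ ?_ y
  · intro a b ha hb
    rw [lie_add, map_add, ha, hb, map_add, lie_add]
  intro β y hy
  by_cases h0 : ⁅x, y⁆ = 0
  · rw [hτ α x hx, hτ β y hy, smul_lie, lie_smul, h0, map_zero, smul_zero, smul_zero]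
  have hm := lie_mem_genWeightSpace_of_mem_genWeightSpace hx hy
  have hne : genWeightSpace g (α + β : H → ℂ) ≠ ⊥ := by
    intro hb
    apply h0
    have hm' : ⁅x, y⁆ ∈ genWeightSpace g (α + β : H → ℂ) := hm
    rw [hb, LieSubmodule.mem_bot] at hm'
    exact hm'
  have h1 := hτ ⟨_, hne⟩ ⁅x, y⁆ hm
  rw [h1, hτ α x hx, hτ β y hy, smul_lie, lie_smul, smul_smul, ← Complex.exp_add]
  rfl

theorem torus_mem {σ ψ : g ≃ₗ[ℂ] g} (hσ : IsLieAut σ) (hfix : ∀ h ∈ H, σ h = h)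
    (hψ : ψ ∈ adjointGroup g) (hneg : ∀ h ∈ H, ψ h = -h) : σ ∈ adjointGroup g := by
  obtain ⟨z, hz⟩ := exists_log hσ hfix
  obtain ⟨τ, hτ, hτz⟩ := exists_torus H ((1 / 2 : ℂ) • z)
  have hψa := adjointGroup_isLieAut hψ
  have hτz' : ∀ (α : Weight ℂ H g) (x : g), x ∈ rootSpace H α →
      τ x = Complex.exp (1 / 2 * α z) • x := by
    intro α x hx
    rw [hτz α x hx]
    congr 2
    exact (Weight.toLinear ℂ H g α).map_smul _ _
  have h1 : ((σ * (ψ * τ) : g ≃ₗ[ℂ] g) : g →ₗ[ℂ] g) = ((τ * ψ : g ≃ₗ[ℂ] g) : g →ₗ[ℂ] g) := by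
    refine end_ext_weight H fun α x hx => ?_
    have hy := map_root_of_neg hψa hneg hx
    change σ (ψ (τ x)) = τ (ψ x)
    rw [hτz' α x hx, map_smul, map_smul, hz _ _ hy, hτz' _ _ hy, smul_smul, ← Complex.exp_add,
      Weight.coe_neg, Pi.neg_apply]
    congr 2
    ring
  have h2 : σ * (ψ * τ) = τ * ψ := LinearEquiv.toLinearMap_injective h1
  have h3 : σ = (τ * ψ * τ⁻¹) * ψ⁻¹ := by
    rw [eq_mul_inv_iff_mul_eq, eq_mul_inv_iff_mul_eq, mul_assoc, h2]
  rw [h3]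
  exact mul_mem (adjointGroup_normal hτ hψ) (inv_mem hψ)

end Torus

/-- Let `g` be a complex simple Lie algebra whose Chevalley involution
`ψ` is an inner automorphism, and let `G = Aut(g)⁰` be its adjoint group acting on
`V = g`.  Then `G'/G` is the group of order 2 generated by the coset of the scalar map
`-1`; equivalently `G' = G ∪ (-1)·G` and `-1 ∉ G`. -/
theorem stmt8 (g : Type) [LieRing g] [LieAlgebra ℂ g] [FiniteDimensional ℂ g]
    [LieAlgebra.IsSimple ℂ g]
    (t : LieSubalgebra ℂ g) [t.IsCartanSubalgebra]
    -- the Chevalley involution `ψ`, assumed inner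
    (ψ : g ≃ₗ⁅ℂ⁆ g) (hψ2 : ∀ x : g, ψ (ψ x) = x) (hψt : ∀ x ∈ t, ψ x = -x)
    (hinner : ψ.toLinearEquiv ∈ adjointGroup g) :
    (LinearEquiv.neg ℂ : g ≃ₗ[ℂ] g) ∉ adjointGroup g ∧
    (∀ φ : g ≃ₗ[ℂ] g, φ ∈ primeGroup (adjointGroup g) ↔
      (φ ∈ adjointGroup g ∨
        ∃ u ∈ adjointGroup g, φ = (LinearEquiv.neg ℂ : g ≃ₗ[ℂ] g) * u)) := by
  have hneg := neg_mem_primeGroup t hinner hψt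
  have hsub : ∀ u ∈ adjointGroup g, u ∈ primeGroup (adjointGroup g) :=
    fun u hu f _ hinv v => hinv u hu v
  refine ⟨neg_notMem_adjointGroup, fun φ => ⟨fun hφ => ?_, ?_⟩⟩
  · have htr : ∀ (k : ℕ) (x : g), LinearMap.trace ℂ g ((LieAlgebra.ad ℂ g (φ x)) ^ k) =
        LinearMap.trace ℂ g ((LieAlgebra.ad ℂ g x) ^ k) := fun k x =>
      hφ _ (isPolyFun_trace k)
        (fun u hu v => conj_trace_pow (adjointGroup_isLieAut hu) v k) x
    obtain ⟨σ, hσ, hpm⟩ := preserver_pm htr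
    have hσp : σ ∈ primeGroup (adjointGroup g) := by
      rcases hpm with h | h
      · rw [← h]; exact hφ
      · rw [h] at hφ
        exact (Subgroup.mul_mem_cancel_left _ hneg).mp hφ
    have hσG : σ ∈ adjointGroup g := by
      obtain ⟨u, hu, hut⟩ := exists_preserves (H := t) hσ
      have hua := adjointGroup_isLieAut hu
      obtain ⟨w, hw, hwt⟩ := separation (hua.mul hσ) (mul_mem (hsub u hu) hσp) hut
      have hwa := adjointGroup_isLieAut hw
      have h1 : w⁻¹ * (u * σ) ∈ adjointGroup g := by
        refine torus_mem (H := t) (hwa.inv.mul (hua.mul hσ)) (fun h hh => ?_) hinner hψt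
        rw [linEquiv_mul_apply, ← hwt h hh, linEquiv_inv_apply]
      have h2 := (Subgroup.mul_mem_cancel_left _ (inv_mem hw)).mp h1
      exact (Subgroup.mul_mem_cancel_left _ hu).mp h2
    rcases hpm with h | h
    · left; rw [h]; exact hσG
    · right; exact ⟨σ, hσG, h⟩
  · rintro (h | ⟨u, hu, rfl⟩)
    · exact hsub φ h
    · exact mul_mem hneg (hsub u hu)
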